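/- Let a₁, …, a_k ∈ [1,γ] \ {1} and P, X₁, …, X_k ∈ Γ₊ with P = ⟨a₁⟩·X₁ = ⋯ = ⟨a_k⟩·X_k in Γ₊. Then there exist j ∈ [1,γ] and Z ∈ Γ₊ such that j is a least upper bound of {a₁, …, a_k} in ([1,γ],≤) and P = ⟨j⟩·Z in Γ₊. -/

import Mathlib

/-!
The interval `[1,γ]` is a lattice, and the positive monoid acts on it so that the image of `1` under
`P` is the largest element `head P` of `[1,γ]` dividing `P` on the left. All `a i` are then below
`head P`, hence so is their join `j`, and `⟨j⟩` divides `⟨head P⟩`, which divides `P`.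

**Order and geometry.** For the geometric representation of `W`, reflection length is
the dimension of the moved space `mov w = im (w - 1)` (Carter's lemma, `rlen_eq_rk`), and
on `[1,γ]` the reflection order is inclusion of moved spaces (`below_of_mov_le`). A moved space is
spanned by the positive roots it contains.

**Lattice property.** For `α ∈ [1,γ]` let `C α` be the cone spanned by the positive roots in
`mov α`. The key result `good_of_nonneg` says that for a Coxeter element `c = s₁ ⋯ sₙ` and a
nonnegative vector `x` there is `δ ≤ c` with `x ∈ mov δ` which is below every `α ≤ c` with `x ∈ C α`.
If `s₁` makes the first coordinate of `x` negative, then `e₁ ∈ mov α` for every such `α`, and since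
`C α` is spanned by `e₁` and `C (s₁ α)` (`sub_coord_mem_rootCone`) the problem reduces to
`s₂ ⋯ sₙ` and the vector `x` with its first coordinate removed. Otherwise conjugation by `s₁` moves
on to `s₂ ⋯ sₙ s₁` and the nonnegative vector `s₁ x`. This cannot go on forever for `x ≠ 0`: the
orbit of `x` under `c` sums to a vector fixed by `c`, and `c` fixes only `0` in its moved space.
The meet of a family in `[1,γ]` is obtained by taking for `x` a generic vector in the cone of the
positive roots common to all its moved spaces (`exists_glb`). Joins are meets of upper bounds.

**Monoid.** The generator `⟨w⟩` acts on `[1,γ]` by `v ↦ w (v ∧ w⁻¹γ)`; the defining relations are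
respected by `push_push`.
-/

variable {B : Type*} {W : Type*} [Group W] {M : CoxeterMatrix B}

/-- The reflection length of `w`: the least `k` such that `w` is a product of `k`
reflections (conjugates of simple reflections). -/
noncomputable def rlen (cs : CoxeterSystem M W) (w : W) : ℕ :=
  sInf {k | ∃ l : List W, (∀ t ∈ l, cs.IsReflection t) ∧ l.length = k ∧ l.prod = w}

/-- The reflection (absolute) order on `W`: `u ≤ w` iff `ℓ(w) = ℓ(u) + ℓ(u⁻¹w)`. -/
def rle (cs : CoxeterSystem M W) (u w : W) : Prop :=
  rlen cs w = rlen cs u + rlen cs (u⁻¹ * w)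

/-- A Coxeter element: a conjugate of a product of all the simple reflections,
each occurring exactly once, in some order. -/
def IsCoxeterElement [Fintype B] (cs : CoxeterSystem M W) (γ : W) : Prop :=
  ∃ (v : W) (l : List B), l.Nodup ∧ (∀ i : B, i ∈ l) ∧ γ = v * cs.wordProd l * v⁻¹

/-- `p` is a least upper bound of the set `s` within the interval `[1,γ]`
under the reflection order. -/
def IsIntervalLUB (cs : CoxeterSystem M W) (γ : W) (s : Set W) (p : W) : Prop :=
  rle cs p γ ∧ (∀ x ∈ s, rle cs x p) ∧
    ∀ r, rle cs r γ → (∀ x ∈ s, rle cs x r) → rle cs p r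

/-- The generating set of the poset group/monoid: the interval `[1,γ]` minus the identity. -/
abbrev NCGen (cs : CoxeterSystem M W) (γ : W) : Type _ :=
  {w : W // w ≠ 1 ∧ rle cs w γ}

/-- The defining relations of the positive monoid `Γ₊(W,γ)`:
`⟨w₁⟩⟨w₂⟩ = ⟨w₃⟩` whenever `w₁w₂ = w₃` in `W` and `ℓ(w₁) + ℓ(w₂) = ℓ(w₃)`. -/
def posRels (cs : CoxeterSystem M W) (γ : W) :
    FreeMonoid (NCGen cs γ) → FreeMonoid (NCGen cs γ) → Prop :=
  fun x y => ∃ w₁ w₂ w₃ : NCGen cs γ,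
    x = FreeMonoid.of w₁ * FreeMonoid.of w₂ ∧ y = FreeMonoid.of w₃ ∧
    (w₁ : W) * (w₂ : W) = (w₃ : W) ∧
    rlen cs (w₁ : W) + rlen cs (w₂ : W) = rlen cs (w₃ : W)

/-- The positive monoid `Γ₊(W,γ)`, presented by the generators `⟨w⟩`, `w ∈ [1,γ] \ {1}`,
and the relations `posRels`. -/
abbrev PosMonoid (cs : CoxeterSystem M W) (γ : W) := PresentedMonoid (posRels cs γ)

open Classical in
/-- The generator `⟨w⟩` of `Γ₊(W,γ)` for `w ∈ [1,γ]`, interpreting `⟨1⟩` as the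
identity of the monoid (and defaulting to the identity off the interval). -/
noncomputable def pgen (cs : CoxeterSystem M W) (γ : W) (w : W) : PosMonoid cs γ :=
  if h : w ≠ 1 ∧ rle cs w γ then PresentedMonoid.of (posRels cs γ) ⟨w, h⟩ else 1

/-! ### The geometric representation -/

/-- The simple root `e i`, a standard basis vector of `B → ℝ`. -/
noncomputable def simpleRoot (i : B) : B → ℝ := by
  classical exact Pi.single i 1

theorem simpleRoot_self (i : B) : simpleRoot i i = 1 := by simp [simpleRoot]

theorem simpleRoot_ne {i j : B} (h : j ≠ i) : simpleRoot i j = 0 := by simp [simpleRoot, h]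

theorem simpleRoot_nonneg (i j : B) : 0 ≤ simpleRoot i j := by
  by_cases h : j = i
  · subst h; simp [simpleRoot_self]
  · simp [simpleRoot_ne h]

theorem eq_sum_simpleRoot [Fintype B] (x : B → ℝ) : x = ∑ i, x i • simpleRoot i := by
  classical
  ext j
  rw [Finset.sum_apply, Finset.sum_eq_single j]
  · simp [simpleRoot_self]
  · intro b _ hb; simp [simpleRoot_ne hb.symm]
  · simp

/-- The coroot functional `x ↦ 2 (x, e i)` of the Coxeter form with
`(e i, e j) = -cos (π / M i j)`. An infinite bond is encoded by `M i j = 0`; the junk value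
`π / 0 = 0` then gives the customary `(e i, e j) = -1`. -/
noncomputable def coroot [Fintype B] (M : CoxeterMatrix B) (i : B) : (B → ℝ) →ₗ[ℝ] ℝ :=
  ∑ j, (-2 * Real.cos (Real.pi / M i j)) • LinearMap.proj j

theorem coroot_simpleRoot [Fintype B] (M : CoxeterMatrix B) (i j : B) :
    coroot M i (simpleRoot j) = -2 * Real.cos (Real.pi / M i j) := by
  classical
  simp only [coroot, LinearMap.sum_apply, LinearMap.smul_apply, LinearMap.proj_apply, smul_eq_mul]
  rw [Finset.sum_eq_single j]
  · simp [simpleRoot_self]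
  · intro b _ hb; simp [simpleRoot_ne hb]
  · simp

theorem coroot_self [Fintype B] (M : CoxeterMatrix B) (i : B) :
    coroot M i (simpleRoot i) = 2 := by
  rw [coroot_simpleRoot]; simp

/-- The simple reflection of `B → ℝ` attached to `i`. -/
noncomputable def simpleRefl [Fintype B] (M : CoxeterMatrix B) (i : B) :
    Module.End ℝ (B → ℝ) :=
  LinearMap.id - (coroot M i).smulRight (simpleRoot i)

theorem simpleRefl_apply [Fintype B] (M : CoxeterMatrix B) (i : B) (x : B → ℝ) :
    simpleRefl M i x = x - coroot M i x • simpleRoot i := rfl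

theorem simpleRefl_mul_self [Fintype B] (M : CoxeterMatrix B) (i : B) :
    simpleRefl M i * simpleRefl M i = 1 := by
  ext1 x
  simp only [Module.End.mul_apply, simpleRefl_apply, map_sub, map_smul, coroot_self,
    Module.End.one_apply]
  module

/-- Values `sin (kθ) / sin θ` (Chebyshev polynomials of the second kind in `c = cos θ`),
defined by their recursion. -/
def cheb (c : ℝ) : ℕ → ℝ
  | 0 => 0
  | 1 => 1
  | k + 2 => 2 * c * cheb c (k + 1) - cheb c k

theorem cheb_mul_sin (θ : ℝ) (k : ℕ) : cheb (Real.cos θ) k * Real.sin θ = Real.sin (k * θ) := by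
  induction k using Nat.twoStepInduction with
  | zero => simp [cheb]
  | one => simp [cheb]
  | more k h1 h2 =>
    have e1 : ((k + 2 : ℕ) : ℝ) * θ = ((k + 1 : ℕ) : ℝ) * θ + θ := by push_cast; ring
    have e2 : (k : ℝ) * θ = ((k + 1 : ℕ) : ℝ) * θ - θ := by push_cast; ring
    rw [e2, Real.sin_sub] at h1
    rw [e1, Real.sin_add, cheb, sub_mul, mul_assoc, h2, h1]
    ring

theorem cheb_one (k : ℕ) : cheb 1 k = k := by
  induction k using Nat.twoStepInduction with
  | zero => simp [cheb]
  | one => simp [cheb]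
  | more k h1 h2 => rw [cheb, h1, h2]; push_cast; ring

theorem cheb_nonneg {m k : ℕ} (hm : m ≠ 1) (hk : m = 0 ∨ k ≤ m) :
    0 ≤ cheb (Real.cos (Real.pi / m)) k := by
  rcases Nat.eq_zero_or_pos m with rfl | hpos
  · simp [cheb_one]
  have hk : k ≤ m := by rcases hk with h | h <;> omega
  have hm2 : (2 : ℝ) ≤ m := by exact_mod_cast (show 2 ≤ m by omega)
  have hm0 : (0 : ℝ) < m := by linarith
  have hs : 0 < Real.sin (Real.pi / m) := by
    apply Real.sin_pos_of_pos_of_lt_pi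
    · positivity
    · rw [div_lt_iff₀ hm0]; nlinarith [Real.pi_pos]
  have h := cheb_mul_sin (Real.pi / m) k
  have h2 : 0 ≤ Real.sin (k * (Real.pi / m)) := by
    apply Real.sin_nonneg_of_nonneg_of_le_pi
    · positivity
    · rw [← mul_div_assoc, div_le_iff₀ hm0]
      have : (k : ℝ) ≤ m := by exact_mod_cast hk
      nlinarith [Real.pi_pos]
  nlinarith

theorem map_alternatingWord_two_mul {G : Type*} [Monoid G] (f : B → G) (i j : B) (m : ℕ) :
    ((CoxeterSystem.alternatingWord i j (2 * m)).map f).prod = (f i * f j) ^ m := by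
  induction m with
  | zero => simp [CoxeterSystem.alternatingWord]
  | succ m ih =>
    rw [Nat.mul_succ, CoxeterSystem.alternatingWord_succ', CoxeterSystem.alternatingWord_succ']
    simp [ih, pow_succ', mul_assoc]

section
variable [Fintype B]

/-- Applying the two simple reflections alternately to a simple root. -/
theorem alternating_apply (M : CoxeterMatrix B) (i j : B) (k : ℕ) :
    ((CoxeterSystem.alternatingWord i j k).map (simpleRefl M)).prod (simpleRoot i) =
      cheb (Real.cos (Real.pi / M i j)) (k + 1) • simpleRoot (if Even k then i else j) +
      cheb (Real.cos (Real.pi / M i j)) k • simpleRoot (if Even k then j else i) := by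
  induction k with
  | zero => simp [cheb, CoxeterSystem.alternatingWord]
  | succ k ih =>
    rw [CoxeterSystem.alternatingWord_succ', List.map_cons, List.prod_cons, Module.End.mul_apply,
      ih]
    by_cases hk : Even k
    · have hk' : ¬ Even (k + 1) := by simpa [Nat.even_add_one] using hk
      simp only [hk, hk', if_true, if_false, simpleRefl_apply, map_add, map_smul, coroot_self,
        coroot_simpleRoot, M.symmetric j i, cheb]
      module
    · have hk' : Even (k + 1) := by simpa [Nat.even_add_one] using hk
      simp only [hk, hk', if_true, if_false, simpleRefl_apply, map_add, map_smul, coroot_self,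
        coroot_simpleRoot, cheb]
      module

theorem cheb_period {m : ℕ} (hm : 2 ≤ m) :
    cheb (Real.cos (Real.pi / m)) (2 * m) = 0 ∧
    cheb (Real.cos (Real.pi / m)) (2 * m + 1) = 1 := by
  have hm2 : (2 : ℝ) ≤ m := by exact_mod_cast hm
  have hm0 : (0 : ℝ) < m := by linarith
  have hs : 0 < Real.sin (Real.pi / m) := by
    apply Real.sin_pos_of_pos_of_lt_pi
    · positivity
    · rw [div_lt_iff₀ hm0]; nlinarith [Real.pi_pos]
  have h1 := cheb_mul_sin (Real.pi / m) (2 * m)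
  have h2 := cheb_mul_sin (Real.pi / m) (2 * m + 1)
  have e1 : ((2 * m : ℕ) : ℝ) * (Real.pi / m) = 2 * Real.pi := by
    push_cast; field_simp
  have e2 : ((2 * m + 1 : ℕ) : ℝ) * (Real.pi / m) = Real.pi / m + 2 * Real.pi := by
    push_cast; field_simp; ring
  rw [e1, Real.sin_two_pi] at h1
  rw [e2, Real.sin_add_two_pi] at h2
  constructor
  · exact (mul_eq_zero.1 h1).resolve_right hs.ne'
  · exact mul_right_cancel₀ hs.ne' (by rw [h2, one_mul])

theorem braid_apply_simpleRoot (M : CoxeterMatrix B) (i j : B) (hm : 2 ≤ M i j) :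
    ((simpleRefl M i * simpleRefl M j) ^ M i j) (simpleRoot i) = simpleRoot i := by
  rw [← map_alternatingWord_two_mul, alternating_apply, (cheb_period hm).1, (cheb_period hm).2]
  simp

/-- The simple reflections satisfy the braid relations: on the plane of `e i`, `e j` this is
`braid_apply_simpleRoot`, and the common kernel of the two coroots is a complement. -/
theorem simpleRefl_isLiftable (M : CoxeterMatrix B) : M.IsLiftable (simpleRefl M) := by
  intro i j
  by_cases hij : i = j
  · subst hij; rw [simpleRefl_mul_self, one_pow]
  rcases Nat.eq_zero_or_pos (M i j) with h0 | hpos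
  · rw [h0, pow_zero]
  have hm : 2 ≤ M i j := by
    have := M.off_diagonal i j hij
    omega
  have hj : ((simpleRefl M i * simpleRefl M j) ^ M i j) (simpleRoot j) = simpleRoot j := by
    have h := braid_apply_simpleRoot M j i (by rw [M.symmetric]; exact hm)
    rw [M.symmetric j i] at h
    have hinv : (simpleRefl M i * simpleRefl M j) ^ M i j *
        (simpleRefl M j * simpleRefl M i) ^ M i j = 1 := by
      have hab : (simpleRefl M i * simpleRefl M j) * (simpleRefl M j * simpleRefl M i) = 1 := by
        rw [mul_assoc, ← mul_assoc (simpleRefl M j), simpleRefl_mul_self, one_mul,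
          simpleRefl_mul_self]
      have hba : (simpleRefl M j * simpleRefl M i) * (simpleRefl M i * simpleRefl M j) = 1 := by
        rw [mul_assoc, ← mul_assoc (simpleRefl M i), simpleRefl_mul_self, one_mul,
          simpleRefl_mul_self]
      have hc : Commute (simpleRefl M i * simpleRefl M j) (simpleRefl M j * simpleRefl M i) := by
        rw [Commute, SemiconjBy, hab, hba]
      rw [← hc.mul_pow, hab, one_pow]
    calc _ = ((simpleRefl M i * simpleRefl M j) ^ M i j)
          (((simpleRefl M j * simpleRefl M i) ^ M i j) (simpleRoot j)) := by rw [h]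
      _ = ((simpleRefl M i * simpleRefl M j) ^ M i j *
        (simpleRefl M j * simpleRefl M i) ^ M i j) (simpleRoot j) := rfl
      _ = _ := by rw [hinv]; rfl
  ext1 z
  set c := Real.cos (Real.pi / M i j) with hc
  have hs : 1 - c ^ 2 ≠ 0 := by
    have hm2 : (2 : ℝ) ≤ M i j := by exact_mod_cast hm
    have hm0 : (0 : ℝ) < M i j := by linarith
    have hs : 0 < Real.sin (Real.pi / M i j) := by
      apply Real.sin_pos_of_pos_of_lt_pi
      · positivity
      · rw [div_lt_iff₀ hm0]; nlinarith [Real.pi_pos]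
    have := Real.sin_sq_add_cos_sq (Real.pi / M i j)
    rw [← hc] at this
    have : 1 - c ^ 2 = Real.sin (Real.pi / M i j) ^ 2 := by linarith
    rw [this]; positivity
  set p := coroot M i z
  set q := coroot M j z
  -- the projection of `z` to the plane, found by inverting the Gram matrix
  set a := (p + c * q) / (2 * (1 - c ^ 2))
  set b := (q + c * p) / (2 * (1 - c ^ 2))
  set y := z - a • simpleRoot i - b • simpleRoot j with hy
  have hyi : coroot M i y = 0 := by
    simp only [hy, map_sub, map_smul, coroot_self, coroot_simpleRoot, ← hc, smul_eq_mul]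
    simp only [a, b]
    field_simp
    ring
  have hyj : coroot M j y = 0 := by
    simp only [hy, map_sub, map_smul, coroot_self, coroot_simpleRoot, M.symmetric j i, ← hc,
      smul_eq_mul]
    simp only [a, b]
    field_simp
    ring
  have hfix : (simpleRefl M i * simpleRefl M j) y = y := by
    rw [Module.End.mul_apply, simpleRefl_apply M j, hyj, zero_smul, sub_zero, simpleRefl_apply,
      hyi, zero_smul, sub_zero]
  have hfixk : ∀ k : ℕ, ((simpleRefl M i * simpleRefl M j) ^ k) y = y := by
    intro k
    induction k with
    | zero => simp
    | succ k ih => rw [pow_succ, Module.End.mul_apply, hfix, ih]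
  have hz : z = y + a • simpleRoot i + b • simpleRoot j := by rw [hy]; module
  rw [hz]
  simp only [map_add, map_smul, hfixk, braid_apply_simpleRoot M i j hm, hj, Module.End.one_apply]

/-- The geometric representation of a Coxeter group on `B → ℝ`. -/
noncomputable def geomRep (cs : CoxeterSystem M W) : W →* Module.End ℝ (B → ℝ) :=
  cs.lift ⟨simpleRefl M, simpleRefl_isLiftable M⟩

variable (cs : CoxeterSystem M W)

theorem geomRep_simple (i : B) : geomRep cs (cs.simple i) = simpleRefl M i :=
  cs.lift_apply_simple _ i

theorem geomRep_simple_apply (i : B) (x : B → ℝ) :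
    geomRep cs (cs.simple i) x = x - coroot M i x • simpleRoot i := by
  rw [geomRep_simple, simpleRefl_apply]

theorem geomRep_wordProd (l : List B) :
    geomRep cs (cs.wordProd l) = (l.map (simpleRefl M)).prod := by
  rw [CoxeterSystem.wordProd, map_list_prod, List.map_map]
  congr 2
  ext1 i
  exact geomRep_simple cs i

theorem geomRep_mul_apply (u v : W) (x : B → ℝ) :
    geomRep cs (u * v) x = geomRep cs u (geomRep cs v x) := by
  rw [map_mul, Module.End.mul_apply]

theorem geomRep_inv_apply (u : W) (x : B → ℝ) :
    geomRep cs u⁻¹ (geomRep cs u x) = x := by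
  rw [← geomRep_mul_apply, inv_mul_cancel, map_one, Module.End.one_apply]

theorem geomRep_apply_inv (u : W) (x : B → ℝ) :
    geomRep cs u (geomRep cs u⁻¹ x) = x := by
  rw [← geomRep_mul_apply, mul_inv_cancel, map_one, Module.End.one_apply]

/-- If `i` is not a right descent of `w`, then `w` sends `e i` to a nonnegative vector. A
maximal alternating suffix in `i` and some right descent `j` is split off `w`, and the remaining
left factor has neither `i` nor `j` as a right descent. -/
theorem geomRep_nonneg_of_not_descent (w : W) (i : B) (h : ¬ cs.IsRightDescent w i) :
    ∀ b, 0 ≤ geomRep cs w (simpleRoot i) b := by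
  induction hn : cs.length w using Nat.strong_induction_on generalizing w i with
  | _ n ih =>
  subst hn
  by_cases hw : w = 1
  · subst hw; intro b; simpa using simpleRoot_nonneg i b
  obtain ⟨j, hj⟩ := cs.exists_rightDescent_of_ne_one hw
  have hij : i ≠ j := by rintro rfl; exact h hj
  -- the alternating suffixes of `w`
  let Pk : ℕ → Prop := fun k => ∃ v, w = v * cs.wordProd (CoxeterSystem.alternatingWord i j k) ∧
    cs.length w = cs.length v + k
  have hP1 : Pk 1 := by
    refine ⟨w * cs.simple j, ?_, ?_⟩
    · simp [CoxeterSystem.alternatingWord]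
    · exact (cs.isRightDescent_iff.1 hj).symm
  have hbd : ∀ k, Pk k → k ≤ cs.length w := by
    rintro k ⟨v, -, hv⟩; omega
  classical
  set k := Nat.findGreatest Pk (cs.length w) with hk
  have hPk : Pk k := Nat.findGreatest_spec (hbd 1 hP1) hP1
  have hk1 : 1 ≤ k := Nat.le_findGreatest (hbd 1 hP1) hP1
  have hmax : ¬ Pk (k + 1) := by
    intro hc
    have := Nat.le_findGreatest (hbd _ hc) hc
    omega
  obtain ⟨v, hv, hlen⟩ := hPk
  have hvb : ¬ cs.IsRightDescent v (if Even k then j else i) := by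
    intro hd
    apply hmax
    refine ⟨v * cs.simple (if Even k then j else i), ?_, ?_⟩
    · rw [CoxeterSystem.alternatingWord_succ', cs.wordProd_cons, ← mul_assoc,
        cs.simple_mul_simple_cancel_right]
      exact hv
    · have := cs.isRightDescent_iff.1 hd
      omega
  have hva : ¬ cs.IsRightDescent v (if Even k then i else j) := by
    intro hd
    have := cs.isRightDescent_iff.1 hd
    obtain ⟨k', hk'⟩ : ∃ k', k = k' + 1 := ⟨k - 1, by omega⟩
    have hlet : (if Even k' then j else i) = (if Even k then i else j) := by
      rw [hk']; by_cases hev : Even k' <;> simp [hev, Nat.even_add_one]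
    have hw' : w = (v * cs.simple (if Even k then i else j)) *
        cs.wordProd (CoxeterSystem.alternatingWord i j k') := by
      rw [hv, hk', CoxeterSystem.alternatingWord_succ', cs.wordProd_cons, ← hk', hlet, mul_assoc]
    have h1 := cs.length_mul_le (v * cs.simple (if Even k then i else j))
      (cs.wordProd (CoxeterSystem.alternatingWord i j k'))
    have h2 := cs.length_wordProd_le (CoxeterSystem.alternatingWord i j k')
    rw [CoxeterSystem.length_alternatingWord] at h2
    rw [← hw'] at h1
    omega
  have hm1 : M i j ≠ 1 := M.off_diagonal i j hij
  have hkm : M i j = 0 ∨ k + 1 ≤ M i j := by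
    by_contra hcon
    push Not at hcon
    obtain ⟨hm0, hlt⟩ := hcon
    have hred : cs.IsReduced (CoxeterSystem.alternatingWord i j k) := by
      have h1 := cs.length_mul_le v (cs.wordProd (CoxeterSystem.alternatingWord i j k))
      have h2 := cs.length_wordProd_le (CoxeterSystem.alternatingWord i j k)
      rw [CoxeterSystem.length_alternatingWord] at h2
      rw [← hv] at h1
      rw [CoxeterSystem.IsReduced, CoxeterSystem.length_alternatingWord]
      omega
    rcases Nat.lt_or_ge (M i j) k with hgt | hle
    · exact cs.not_isReduced_alternatingWord i j hm0 hgt hred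
    have hkeq : k = M i j := by omega
    -- the braid relation makes `i` the last letter of `w`
    apply h
    obtain ⟨k', hk'⟩ : ∃ k', k = k' + 1 := ⟨k - 1, by omega⟩
    have hbr : cs.wordProd (CoxeterSystem.alternatingWord i j k) =
        cs.wordProd (CoxeterSystem.alternatingWord j i k) := by
      have := cs.wordProd_braidWord_eq i j
      rw [CoxeterSystem.braidWord, CoxeterSystem.braidWord, M.symmetric j i, ← hkeq] at this
      exact this
    have hws : w * cs.simple i = v * cs.wordProd (CoxeterSystem.alternatingWord i j k') := by
      rw [hv, hbr, hk', CoxeterSystem.alternatingWord_succ, cs.wordProd_concat, ← mul_assoc,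
        cs.simple_mul_simple_cancel_right]
    have h1 := cs.length_mul_le v (cs.wordProd (CoxeterSystem.alternatingWord i j k'))
    have h2 := cs.length_wordProd_le (CoxeterSystem.alternatingWord i j k')
    rw [CoxeterSystem.length_alternatingWord] at h2
    rw [CoxeterSystem.IsRightDescent, hws]
    omega
  have hA := ih (cs.length v) (by omega) v _ hva rfl
  have hB := ih (cs.length v) (by omega) v _ hvb rfl
  intro b
  rw [hv, geomRep_mul_apply, geomRep_wordProd, alternating_apply, map_add, map_smul, map_smul]
  simp only [Pi.add_apply, Pi.smul_apply, smul_eq_mul]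
  have c1 := cheb_nonneg (k := k + 1) hm1 hkm
  have c2 := cheb_nonneg (k := k) hm1 (by omega)
  have := mul_nonneg c1 (hA b)
  have := mul_nonneg c2 (hB b)
  linarith

theorem geomRep_nonpos_of_descent (w : W) (i : B) (h : cs.IsRightDescent w i) :
    ∀ b, geomRep cs w (simpleRoot i) b ≤ 0 := by
  intro b
  have h1 := geomRep_nonneg_of_not_descent cs (w * cs.simple i) i
    (cs.isRightDescent_iff_not_isRightDescent_mul.1 h) b
  have h2 : geomRep cs (cs.simple i) (simpleRoot i) = - simpleRoot i := by
    rw [geomRep_simple_apply, coroot_self]; module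
  rw [geomRep_mul_apply, h2, map_neg, Pi.neg_apply] at h1
  linarith

end

/-! ### Roots and moved spaces -/

/-- A root: an image of a simple root under `W`. -/
def IsRoot [Fintype B] (cs : CoxeterSystem M W) (τ : B → ℝ) : Prop :=
  ∃ w i, τ = geomRep cs w (simpleRoot i)

/-- A positive root: a root with nonnegative coordinates in the basis of simple roots. -/
def IsPosRoot [Fintype B] (cs : CoxeterSystem M W) (τ : B → ℝ) : Prop :=
  IsRoot cs τ ∧ ∀ b, 0 ≤ τ b

/-- The moved space `im (w - 1)` of `w` in the geometric representation. -/
noncomputable def mov [Fintype B] (cs : CoxeterSystem M W) (w : W) : Submodule ℝ (B → ℝ) :=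
  LinearMap.range (geomRep cs w - 1)

/-- The fixed space `ker (w - 1)` of `w` in the geometric representation. -/
noncomputable def fixs [Fintype B] (cs : CoxeterSystem M W) (w : W) : Submodule ℝ (B → ℝ) :=
  LinearMap.ker (geomRep cs w - 1)

/-- The codimension of the fixed space, i.e. the dimension of the moved space. -/
noncomputable def rk [Fintype B] (cs : CoxeterSystem M W) (w : W) : ℕ :=
  Module.finrank ℝ (mov cs w)

/-- The `W`-invariant inner product on `B → ℝ` obtained by averaging the standard one. -/
noncomputable def ip [Fintype B] [Fintype W] (cs : CoxeterSystem M W) :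
    (B → ℝ) →ₗ[ℝ] (B → ℝ) →ₗ[ℝ] ℝ :=
  LinearMap.mk₂ ℝ (fun x y => ∑ w : W, ∑ i, geomRep cs w x i * geomRep cs w y i)
    (fun x x' y => by simp [add_mul, Finset.sum_add_distrib])
    (fun c x y => by simp [Finset.mul_sum, mul_assoc])
    (fun x y y' => by simp [mul_add, Finset.sum_add_distrib])
    (fun c x y => by simp [Finset.mul_sum, mul_left_comm])

section
variable [Fintype B] (cs : CoxeterSystem M W)

theorem mem_mov {w : W} {x : B → ℝ} : x ∈ mov cs w ↔ ∃ y, geomRep cs w y - y = x := by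
  simp [mov, LinearMap.mem_range]

theorem mem_fixs {w : W} {x : B → ℝ} : x ∈ fixs cs w ↔ geomRep cs w x = x := by
  simp [fixs, LinearMap.mem_ker, sub_eq_zero]

theorem rk_add_finrank_fixs (w : W) :
    rk cs w + Module.finrank ℝ (fixs cs w) = Fintype.card B := by
  rw [rk, mov, fixs, LinearMap.finrank_range_add_finrank_ker, Module.finrank_fintype_fun_eq_card]

theorem mov_mul_le (u v : W) : mov cs (u * v) ≤ mov cs u ⊔ mov cs v := by
  intro x hx
  obtain ⟨y, rfl⟩ := (mem_mov cs).1 hx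
  rw [Submodule.mem_sup]
  refine ⟨_, (mem_mov cs).2 ⟨geomRep cs v y, rfl⟩, _, (mem_mov cs).2 ⟨y, rfl⟩, ?_⟩
  rw [geomRep_mul_apply]; abel

theorem rk_mul_le (u v : W) : rk cs (u * v) ≤ rk cs u + rk cs v :=
  (Submodule.finrank_mono (mov_mul_le cs u v)).trans
    (Submodule.finrank_add_le_finrank_add_finrank _ _)

/-- If the ranks add up along `w = u v`, then the moved spaces add up. -/
theorem mov_mul_of_rk {u v : W} (h : rk cs (u * v) = rk cs u + rk cs v) :
    mov cs (u * v) = mov cs u ⊔ mov cs v := by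
  apply Submodule.eq_of_le_of_finrank_le (mov_mul_le cs u v)
  have := Submodule.finrank_add_le_finrank_add_finrank (mov cs u) (mov cs v)
  simp only [rk] at h
  omega

theorem mov_inv_le (u : W) : mov cs u⁻¹ ≤ mov cs u := by
  intro x hx
  obtain ⟨y, rfl⟩ := (mem_mov cs).1 hx
  refine (mem_mov cs).2 ⟨-geomRep cs u⁻¹ y, ?_⟩
  rw [map_neg, geomRep_apply_inv]; abel

theorem mov_inv (u : W) : mov cs u⁻¹ = mov cs u :=
  le_antisymm (mov_inv_le cs u) (by simpa using mov_inv_le cs u⁻¹)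

theorem rk_inv (u : W) : rk cs u⁻¹ = rk cs u := by rw [rk, mov_inv, rk]

theorem mem_mov_conj {g w : W} {x : B → ℝ} :
    x ∈ mov cs (g * w * g⁻¹) ↔ geomRep cs g⁻¹ x ∈ mov cs w := by
  constructor
  · intro hx
    obtain ⟨y, rfl⟩ := (mem_mov cs).1 hx
    refine (mem_mov cs).2 ⟨geomRep cs g⁻¹ y, ?_⟩
    rw [map_sub, geomRep_mul_apply, geomRep_mul_apply, geomRep_inv_apply]
  · intro hx
    obtain ⟨y, hy⟩ := (mem_mov cs).1 hx
    refine (mem_mov cs).2 ⟨geomRep cs g y, ?_⟩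
    rw [geomRep_mul_apply, geomRep_mul_apply, geomRep_inv_apply, ← map_sub, hy,
      geomRep_apply_inv]

theorem rk_conj_le (g w : W) : rk cs (g * w * g⁻¹) ≤ rk cs w := by
  have : mov cs (g * w * g⁻¹) ≤ (mov cs w).map (geomRep cs g) := by
    intro x hx
    exact ⟨_, (mem_mov_conj cs).1 hx, geomRep_apply_inv cs g x⟩
  exact (Submodule.finrank_mono this).trans (Submodule.finrank_map_le _ _)

theorem rk_conj (g w : W) : rk cs (g * w * g⁻¹) = rk cs w := by
  apply le_antisymm (rk_conj_le cs g w)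
  have := rk_conj_le cs g⁻¹ (g * w * g⁻¹)
  simpa [mul_assoc] using this

theorem rk_one : rk cs (1 : W) = 0 := by
  rw [rk, mov, map_one, sub_self, LinearMap.range_zero, finrank_bot]

/-! ### Roots and positivity -/

theorem simpleRoot_isPosRoot (i : B) : IsPosRoot cs (simpleRoot i) :=
  ⟨⟨1, i, by simp⟩, simpleRoot_nonneg i⟩

variable {cs} in
theorem IsRoot.map {τ : B → ℝ} (h : IsRoot cs τ) (g : W) : IsRoot cs (geomRep cs g τ) := by
  obtain ⟨w, i, rfl⟩ := h
  exact ⟨g * w, i, by rw [geomRep_mul_apply]⟩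

variable {cs} in
theorem IsRoot.ne_zero {τ : B → ℝ} (h : IsRoot cs τ) : τ ≠ 0 := by
  obtain ⟨w, i, rfl⟩ := h
  intro h0
  have := geomRep_inv_apply cs w (simpleRoot i)
  rw [h0, map_zero] at this
  have h1 := simpleRoot_self i
  rw [← this] at h1
  simp at h1

variable {cs} in
theorem IsRoot.neg {τ : B → ℝ} (h : IsRoot cs τ) : IsRoot cs (-τ) := by
  obtain ⟨w, i, rfl⟩ := h
  refine ⟨w * cs.simple i, i, ?_⟩
  rw [geomRep_mul_apply, geomRep_simple_apply, coroot_self, ← map_neg]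
  congr 1; module

variable {cs} in
theorem IsRoot.pos_or_neg {τ : B → ℝ} (h : IsRoot cs τ) : IsPosRoot cs τ ∨ IsPosRoot cs (-τ) := by
  obtain ⟨w, i, rfl⟩ := id h
  by_cases hd : cs.IsRightDescent w i
  · right
    refine ⟨h.neg, fun b => ?_⟩
    have := geomRep_nonpos_of_descent cs w i hd b
    simpa using this
  · exact Or.inl ⟨h, geomRep_nonneg_of_not_descent cs w i hd⟩

variable {cs} in
theorem IsPosRoot.sum_pos {τ : B → ℝ} (h : IsPosRoot cs τ) : 0 < ∑ b, τ b := by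
  refine lt_of_le_of_ne (Finset.sum_nonneg fun b _ => h.2 b) fun h0 => h.1.ne_zero ?_
  ext b
  exact (Finset.sum_eq_zero_iff_of_nonneg (fun b _ => h.2 b)).1 h0.symm b (Finset.mem_univ b)

/-- A simple reflection keeps every positive root positive, except the multiples of its own
simple root. -/
theorem IsPosRoot.simple_apply {cs : CoxeterSystem M W} {τ : B → ℝ} (h : IsPosRoot cs τ) (i : B) :
    IsPosRoot cs (geomRep cs (cs.simple i) τ) ∨ ∃ a : ℝ, 0 < a ∧ τ = a • simpleRoot i := by
  rcases (h.1.map (cs.simple i)).pos_or_neg with h1 | h1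
  · exact Or.inl h1
  right
  have hz : ∀ b, b ≠ i → τ b = 0 := by
    intro b hb
    have h2 := h1.2 b
    have h3 := h.2 b
    rw [geomRep_simple_apply] at h2
    simp [simpleRoot_ne hb] at h2
    linarith
  have he : τ = τ i • simpleRoot i := by
    ext b
    by_cases hb : b = i
    · subst hb; simp [simpleRoot_self]
    · simp [hz b hb, simpleRoot_ne hb]
  refine ⟨τ i, lt_of_le_of_ne (h.2 i) fun h0 => h.1.ne_zero ?_, he⟩
  rw [he, ← h0, zero_smul]

variable [Fintype W]

/-! ### The invariant inner product -/

theorem ip_apply (x y : B → ℝ) :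
    ip cs x y = ∑ w : W, ∑ i, geomRep cs w x i * geomRep cs w y i := rfl

theorem ip_comm (x y : B → ℝ) : ip cs x y = ip cs y x := by
  simp [ip_apply, mul_comm]

theorem ip_map (g : W) (x y : B → ℝ) : ip cs (geomRep cs g x) (geomRep cs g y) = ip cs x y := by
  simp only [ip_apply, ← geomRep_mul_apply]
  exact Fintype.sum_equiv (Equiv.mulRight g) _ _ fun w => rfl

theorem ip_self_eq_zero {x : B → ℝ} (h : ip cs x x ≤ 0) : x = 0 := by
  have h0 : ∑ w : W, ∑ i, geomRep cs w x i * geomRep cs w x i = 0 :=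
    le_antisymm h (Finset.sum_nonneg fun w _ => Finset.sum_nonneg fun i _ => mul_self_nonneg _)
  have h1 := (Finset.sum_eq_zero_iff_of_nonneg
    (fun w _ => Finset.sum_nonneg fun i _ => mul_self_nonneg _)).1 h0 1 (Finset.mem_univ _)
  have h2 := (Finset.sum_eq_zero_iff_of_nonneg (fun i _ => mul_self_nonneg _)).1 h1
  ext i
  simpa using h2 i (Finset.mem_univ i)

theorem ip_self_pos {x : B → ℝ} (h : x ≠ 0) : 0 < ip cs x x := by
  by_contra hc
  exact h (ip_self_eq_zero cs (not_lt.1 hc))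

theorem ip_fixs_mov {w : W} {x y : B → ℝ} (hx : x ∈ fixs cs w) (hy : y ∈ mov cs w) :
    ip cs x y = 0 := by
  obtain ⟨z, rfl⟩ := (mem_mov cs).1 hy
  have := ip_map cs w x z
  rw [(mem_fixs cs).1 hx] at this
  rw [map_sub, this, sub_self]

/-- `t` acts as the orthogonal reflection in `τ`. -/
def ReflectsIn (t : W) (τ : B → ℝ) : Prop :=
  ∀ x, geomRep cs t x = x - (2 * ip cs x τ / ip cs τ τ) • τ

theorem reflectsIn_conj_simple (w : W) (i : B) :
    ReflectsIn cs (w * cs.simple i * w⁻¹) (geomRep cs w (simpleRoot i)) := by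
  intro x
  set e := simpleRoot i with he
  have hpos : 0 < ip cs e e := ip_self_pos cs (by
    intro h0
    have := simpleRoot_self i
    rw [← he, h0] at this
    simp at this)
  -- invariance under the simple reflection identifies the coroot with `2 ip (·, e) / ip e e`
  have key : ∀ y, coroot M i y = 2 * ip cs y e / ip cs e e := by
    intro y
    have h := ip_map cs (cs.simple i) y e
    rw [geomRep_simple_apply, geomRep_simple_apply, coroot_self, ← he] at h
    simp only [map_sub, map_smul, LinearMap.sub_apply, LinearMap.smul_apply, smul_eq_mul] at h
    field_simp
    linarith
  have h1 : ip cs x (geomRep cs w e) = ip cs (geomRep cs w⁻¹ x) e := by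
    rw [← ip_map cs w (geomRep cs w⁻¹ x) e, geomRep_apply_inv]
  rw [geomRep_mul_apply, geomRep_mul_apply, geomRep_simple_apply, map_sub, map_smul,
    geomRep_apply_inv, key, ip_map, h1]

theorem exists_reflection_of_root {τ : B → ℝ} (h : IsRoot cs τ) :
    ∃ t, cs.IsReflection t ∧ ReflectsIn cs t τ := by
  obtain ⟨w, i, rfl⟩ := h
  exact ⟨_, ⟨w, i, rfl⟩, reflectsIn_conj_simple cs w i⟩

theorem exists_root_of_reflection {t : W} (h : cs.IsReflection t) :
    ∃ τ, IsRoot cs τ ∧ ReflectsIn cs t τ := by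
  obtain ⟨w, i, rfl⟩ := h
  exact ⟨_, ⟨w, i, rfl⟩, reflectsIn_conj_simple cs w i⟩

theorem reflectsIn_simple (i : B) : ReflectsIn cs (cs.simple i) (simpleRoot i) := by
  simpa using reflectsIn_conj_simple cs 1 i

variable {cs}

theorem ReflectsIn.mov_eq {t : W} {τ : B → ℝ} (h : ReflectsIn cs t τ) (hτ : τ ≠ 0) :
    mov cs t = Submodule.span ℝ {τ} := by
  apply le_antisymm
  · intro x hx
    obtain ⟨y, rfl⟩ := (mem_mov cs).1 hx
    rw [h y, sub_sub_cancel_left, ← neg_smul]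
    exact Submodule.smul_mem _ _ (Submodule.mem_span_singleton_self τ)
  · rw [Submodule.span_singleton_le_iff_mem]
    refine (mem_mov cs).2 ⟨-((1 / 2 : ℝ) • τ), ?_⟩
    have := ip_self_pos cs hτ
    rw [h]
    simp only [map_neg, map_smul, LinearMap.neg_apply, LinearMap.smul_apply, smul_eq_mul]
    have e : 2 * -(1 / 2 * ip cs τ τ) / ip cs τ τ = -1 := by field_simp
    rw [e]; module

theorem ReflectsIn.mem_mov {t : W} {τ : B → ℝ} (h : ReflectsIn cs t τ) (hτ : τ ≠ 0) :
    τ ∈ mov cs t := by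
  rw [h.mov_eq hτ]; exact Submodule.mem_span_singleton_self τ

theorem ReflectsIn.rk_eq {t : W} {τ : B → ℝ} (h : ReflectsIn cs t τ) (hτ : τ ≠ 0) :
    rk cs t = 1 := by
  rw [rk, h.mov_eq hτ, finrank_span_singleton hτ]

/-- Multiplying `w` by the reflection in a vector `τ = w y - y` of the moved space of `w` lowers the
rank by one: the product fixes both `y` and the fixed space of `w`. -/
theorem ReflectsIn.rk_mul {t : W} {τ : B → ℝ} (h : ReflectsIn cs t τ) (hτ : τ ≠ 0) {w : W}
    (hw : τ ∈ mov cs w) : rk cs (t⁻¹ * w) + 1 = rk cs w := by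
  have hinv : ∀ x, geomRep cs t⁻¹ x = x - (2 * ip cs x τ / ip cs τ τ) • τ := by
    intro x
    have h1 := h (x - (2 * ip cs x τ / ip cs τ τ) • τ)
    have hp := ip_self_pos cs hτ
    simp only [map_sub, map_smul, LinearMap.sub_apply, LinearMap.smul_apply, smul_eq_mul] at h1
    rw [div_mul_cancel₀ _ hp.ne'] at h1
    have h2 : geomRep cs t (x - (2 * ip cs x τ / ip cs τ τ) • τ) = x := by
      rw [map_sub, map_smul, h1]
      have : 2 * (ip cs x τ - 2 * ip cs x τ) / ip cs τ τ = - (2 * ip cs x τ / ip cs τ τ) := by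
        ring
      rw [this]; module
    rw [← geomRep_inv_apply cs t (x - (2 * ip cs x τ / ip cs τ τ) • τ), h2]
  apply le_antisymm
  · obtain ⟨y, hy⟩ := (_root_.mem_mov cs).1 hw
    have hp := ip_self_pos cs hτ
    have hfy : y ∈ fixs cs (t⁻¹ * w) := by
      rw [mem_fixs, geomRep_mul_apply, hinv]
      have e1 : geomRep cs w y = τ + y := by rw [← hy]; abel
      have e2 := ip_map cs w y y
      rw [e1] at e2 ⊢
      simp only [map_add, LinearMap.add_apply, ip_comm cs y τ] at e2
      have e3 : 2 * ip cs (τ + y) τ / ip cs τ τ = 1 := by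
        rw [map_add, LinearMap.add_apply, ip_comm cs y τ]
        field_simp
        linarith
      rw [e3]; module
    have hle : fixs cs w ≤ fixs cs (t⁻¹ * w) := by
      intro z hz
      rw [mem_fixs, geomRep_mul_apply, (mem_fixs cs).1 hz, hinv, ip_fixs_mov cs hz hw]
      simp
    have hlt : fixs cs w < fixs cs (t⁻¹ * w) := by
      refine lt_of_le_of_ne hle fun he => hτ ?_
      rw [← he, mem_fixs] at hfy
      rw [← hy, hfy, sub_self]
    have h1 := Submodule.finrank_lt_finrank_of_lt hlt
    have h2 := rk_add_finrank_fixs cs w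
    have h3 := rk_add_finrank_fixs cs (t⁻¹ * w)
    omega
  · have := rk_mul_le cs t (t⁻¹ * w)
    rw [mul_inv_cancel_left, h.rk_eq hτ] at this
    omega

variable (cs)

/-- If the moved spaces of `u` and `v` meet trivially then the ranks add up. -/
theorem rk_mul_of_disjoint {u v : W} (h : mov cs u ⊓ mov cs v = ⊥) :
    rk cs (u * v) = rk cs u + rk cs v := by
  apply le_antisymm (rk_mul_le cs u v)
  have hfix : fixs cs (u * v) ≤ fixs cs u ⊓ fixs cs v := by
    intro x hx
    rw [mem_fixs, geomRep_mul_apply] at hx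
    have h1 : geomRep cs v x - x ∈ mov cs u ⊓ mov cs v := by
      refine ⟨?_, (mem_mov cs).2 ⟨x, rfl⟩⟩
      rw [← mov_inv]
      refine (mem_mov cs).2 ⟨x, ?_⟩
      conv_lhs => rw [← hx]
      rw [geomRep_inv_apply, hx]
    rw [h, Submodule.mem_bot, sub_eq_zero] at h1
    rw [h1] at hx
    exact ⟨(mem_fixs cs).2 hx, (mem_fixs cs).2 h1⟩
  have hdisj : (fixs cs (u * v)) ⊓ (mov cs u ⊔ mov cs v) = ⊥ := by
    rw [eq_bot_iff]
    rintro x ⟨hx, hm⟩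
    obtain ⟨a, ha, b, hb, hab⟩ := Submodule.mem_sup.1 hm
    have h0 : ip cs x x = 0 := by
      have e : ip cs x x = ip cs x (a + b) := by rw [hab]
      rw [e, map_add, ip_fixs_mov cs (hfix hx).1 ha, ip_fixs_mov cs (hfix hx).2 hb, add_zero]
    exact ip_self_eq_zero cs h0.le
  have h1 := Submodule.finrank_sup_add_finrank_inf_eq (fixs cs (u * v)) (mov cs u ⊔ mov cs v)
  have h2 := Submodule.finrank_sup_add_finrank_inf_eq (mov cs u) (mov cs v)
  rw [hdisj, finrank_bot] at h1
  rw [h, finrank_bot] at h2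
  have h3 := Submodule.finrank_le (fixs cs (u * v) ⊔ (mov cs u ⊔ mov cs v))
  rw [Module.finrank_fintype_fun_eq_card] at h3
  have h4 := rk_add_finrank_fixs cs (u * v)
  simp only [rk] at *
  omega

/-- A vector orthogonal to the fixed space of `w` lies in the moved space, since the two spaces are
complementary. -/
theorem mem_mov_of_orthogonal {w : W} {τ : B → ℝ} (h : ∀ x ∈ fixs cs w, ip cs x τ = 0) :
    τ ∈ mov cs w := by
  have hinf : mov cs w ⊓ fixs cs w = ⊥ := by
    rw [eq_bot_iff]
    rintro x ⟨hm, hf⟩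
    exact ip_self_eq_zero cs (ip_fixs_mov cs hf hm).le
  have h1 := Submodule.finrank_sup_add_finrank_inf_eq (mov cs w) (fixs cs w)
  have h4 := rk_add_finrank_fixs cs w
  rw [hinf, finrank_bot, add_zero, ← rk, h4] at h1
  have htop : mov cs w ⊔ fixs cs w = ⊤ := by
    apply Submodule.eq_top_of_finrank_eq
    rw [h1, Module.finrank_fintype_fun_eq_card]
  have hτ : τ ∈ mov cs w ⊔ fixs cs w := htop ▸ Submodule.mem_top
  obtain ⟨a, ha, b, hb, rfl⟩ := Submodule.mem_sup.1 hτ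
  have h5 := h b hb
  rw [map_add, ip_fixs_mov cs hb ha, zero_add] at h5
  rw [ip_self_eq_zero cs h5.le, add_zero]
  exact ha

end

/-- A generic nonnegative combination of a finite set `R` of vectors lies in a given subspace of a
finite family only if the subspace contains all of `R`. -/
theorem exists_generic {V ι : Type*} [AddCommGroup V] [Module ℝ V] [Finite ι]
    (U : ι → Submodule ℝ V) {R : Set V} (hR : R.Finite) :
    ∃ x ∈ Submodule.span NNReal R, ∀ i, x ∈ U i → R ⊆ U i := by
  induction R, hR using Set.Finite.induction_on with
  | empty => exact ⟨0, Submodule.zero_mem _, fun i _ => Set.empty_subset _⟩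
  | @insert ρ R _ _ ih =>
    obtain ⟨x, hx, hgen⟩ := ih
    -- each subspace missing `ρ` contains `x + n ρ` for at most one `n`
    have hfin : {n : ℕ | ∃ i, x + (n : ℝ) • ρ ∈ U i ∧ ρ ∉ U i}.Finite := by
      have : {n : ℕ | ∃ i, x + (n : ℝ) • ρ ∈ U i ∧ ρ ∉ U i} =
          ⋃ i, {n : ℕ | x + (n : ℝ) • ρ ∈ U i ∧ ρ ∉ U i} := by ext n; simp
      rw [this]
      refine Set.finite_iUnion fun i => Set.Subsingleton.finite ?_
      rintro n ⟨hn, hρ⟩ m ⟨hm, -⟩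
      by_contra hne
      apply hρ
      have hsub := (U i).sub_mem hn hm
      have e : x + (n : ℝ) • ρ - (x + (m : ℝ) • ρ) = ((n : ℝ) - m) • ρ := by module
      rw [e] at hsub
      have hnm : (n : ℝ) - m ≠ 0 := sub_ne_zero.2 (by exact_mod_cast hne)
      exact ((U i).smul_mem_iff hnm).1 hsub
    obtain ⟨n, hn⟩ := hfin.exists_notMem
    refine ⟨x + (n : NNReal) • ρ, ?_, ?_⟩
    · exact Submodule.add_mem _ (Submodule.span_mono (Set.subset_insert _ _) hx)
        (Submodule.smul_mem _ _ (Submodule.subset_span (Set.mem_insert _ _)))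
    · intro i hi
      have hi' : x + (n : ℝ) • ρ ∈ U i := by
        have e : (n : NNReal) • ρ = (n : ℝ) • ρ := by
          rw [NNReal.smul_def]; simp
        rwa [e] at hi
      have hρ : ρ ∈ U i := by
        by_contra hρ
        exact hn ⟨i, hi', hρ⟩
      have hx' : x ∈ U i := by
        have := (U i).sub_mem hi' ((U i).smul_mem (n : ℝ) hρ)
        simpa using this
      exact Set.insert_subset hρ (hgen i hx')

section
variable [Fintype B] [Fintype W] (cs : CoxeterSystem M W)

theorem finite_roots : {τ | IsRoot cs τ}.Finite := by
  have : {τ | IsRoot cs τ} = Set.range fun p : W × B => geomRep cs p.1 (simpleRoot p.2) := by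
    ext τ
    simp [IsRoot, eq_comm]
  rw [this]
  exact Set.finite_range _

/-- A nontrivial element has a root in its moved space. Otherwise a generic fixed vector is
orthogonal to no root; moving it into the open dominant chamber contradicts the existence of a
right descent. -/
theorem exists_root_mem_mov {w : W} (hw : w ≠ 1) : ∃ τ, IsRoot cs τ ∧ τ ∈ mov cs w := by
  by_contra hcon
  push Not at hcon
  obtain ⟨s, hs⟩ := (IsNoetherian.noetherian (fixs cs w) : (fixs cs w).FG)
  have : Finite {τ | IsRoot cs τ} := finite_roots cs
  obtain ⟨x, hx, hgen⟩ := exists_generic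
    (fun τ : {τ | IsRoot cs τ} => LinearMap.ker (ip cs τ.1)) s.finite_toSet
  have hxfix : x ∈ fixs cs w := by
    rw [← hs]
    refine Submodule.span_induction (fun y hy => Submodule.subset_span hy)
      (Submodule.zero_mem _) (fun _ _ _ _ => Submodule.add_mem _) ?_ hx
    intro a y _ hy
    rw [NNReal.smul_def]
    exact Submodule.smul_mem _ _ hy
  have hreg : ∀ τ, IsRoot cs τ → ip cs τ x ≠ 0 := by
    intro τ hτ h0
    apply hcon τ hτ
    apply mem_mov_of_orthogonal
    have hle : fixs cs w ≤ LinearMap.ker (ip cs τ) := by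
      rw [← hs, Submodule.span_le]
      exact hgen ⟨τ, hτ⟩ h0
    intro y hy
    rw [ip_comm]
    exact hle hy
  obtain ⟨g, -, hg⟩ := Finset.exists_max_image (Finset.univ : Finset W)
    (fun g => ∑ b, geomRep cs g x b) ⟨1, Finset.mem_univ _⟩
  set y := geomRep cs g x with hy
  have hdom : ∀ i, 0 < ip cs (simpleRoot i) y := by
    intro i
    have hne : ip cs (simpleRoot i) y ≠ 0 := by
      have := hreg (geomRep cs g⁻¹ (simpleRoot i)) ((simpleRoot_isPosRoot cs i).1.map _)
      rwa [← ip_map cs g, geomRep_apply_inv] at this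
    by_contra hneg
    have hneg : ip cs (simpleRoot i) y < 0 := lt_of_le_of_ne (not_lt.1 hneg) hne
    have h1 := hg (cs.simple i * g) (Finset.mem_univ _)
    have hp := ip_self_pos cs (simpleRoot_isPosRoot cs i).1.ne_zero
    rw [geomRep_mul_apply, ← hy, reflectsIn_simple cs i y] at h1
    simp only [Pi.sub_apply, Pi.smul_apply, smul_eq_mul, Finset.sum_sub_distrib,
      ← Finset.mul_sum] at h1
    have h2 := (simpleRoot_isPosRoot cs i).sum_pos
    rw [ip_comm] at h1
    have h3 : 2 * ip cs (simpleRoot i) y / ip cs (simpleRoot i) (simpleRoot i) < 0 :=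
      div_neg_of_neg_of_pos (by linarith) hp
    nlinarith
  have hu : g * w * g⁻¹ ≠ 1 := by
    intro h; apply hw
    have : w = g⁻¹ * (g * w * g⁻¹) * g := by group
    rw [this, h]; group
  obtain ⟨i, hi⟩ := cs.exists_rightDescent_of_ne_one hu
  have hneg := geomRep_nonpos_of_descent cs _ i hi
  have huy : geomRep cs (g * w * g⁻¹) y = y := by
    rw [geomRep_mul_apply, geomRep_mul_apply, hy, geomRep_inv_apply, (mem_fixs cs).1 hxfix]
  have h1 := ip_map cs (g * w * g⁻¹) (simpleRoot i) y
  rw [huy, eq_sum_simpleRoot (geomRep cs (g * w * g⁻¹) (simpleRoot i)), map_sum,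
    LinearMap.sum_apply] at h1
  have h2 : ∑ d, (ip cs (geomRep cs (g * w * g⁻¹) (simpleRoot i) d • simpleRoot d)) y ≤ 0 := by
    apply Finset.sum_nonpos
    intro d _
    rw [map_smul, LinearMap.smul_apply, smul_eq_mul]
    exact mul_nonpos_of_nonpos_of_nonneg (hneg d) (hdom d).le
  have := hdom i
  linarith

/-- Every `w` is a product of `rk w` reflections, and its moved space is spanned by positive
roots. -/
theorem exists_reflection_factorization (w : W) :
    ∃ l : List W, (∀ t ∈ l, cs.IsReflection t) ∧ l.length = rk cs w ∧ l.prod = w ∧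
      mov cs w ≤ Submodule.span ℝ {τ | IsPosRoot cs τ ∧ τ ∈ mov cs w} := by
  induction hn : rk cs w generalizing w with
  | zero =>
    have hw : w = 1 := by
      by_contra hw
      obtain ⟨τ, hτ, hm⟩ := exists_root_mem_mov cs hw
      obtain ⟨t, -, ht⟩ := exists_reflection_of_root cs hτ
      have := ht.rk_mul hτ.ne_zero hm
      omega
    subst hw
    refine ⟨[], by simp, rfl, rfl, ?_⟩
    simp [mov]
  | succ n ih =>
    have hw : w ≠ 1 := by
      rintro rfl
      rw [rk_one] at hn
      omega
    obtain ⟨τ, hτ, hm⟩ := exists_root_mem_mov cs hw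
    obtain ⟨t, htr, ht⟩ := exists_reflection_of_root cs hτ
    have hrk := ht.rk_mul hτ.ne_zero hm
    obtain ⟨l, hl, hlen, hprod, hspan⟩ := ih (t⁻¹ * w) (by omega)
    have hmov := mov_mul_of_rk cs (u := t) (v := t⁻¹ * w)
      (by rw [mul_inv_cancel_left, ht.rk_eq hτ.ne_zero]; omega)
    rw [mul_inv_cancel_left] at hmov
    refine ⟨t :: l, ?_, by simp [hlen], by simp [hprod], ?_⟩
    · intro t' ht'
      rcases List.mem_cons.1 ht' with rfl | h
      · exact htr
      · exact hl _ h
    · conv_lhs => rw [hmov]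
      apply sup_le
      · rw [ht.mov_eq hτ.ne_zero, Submodule.span_singleton_le_iff_mem]
        rcases hτ.pos_or_neg with hp | hp
        · exact Submodule.subset_span ⟨hp, hm⟩
        · rw [← neg_neg τ]
          exact Submodule.neg_mem _ (Submodule.subset_span ⟨hp, Submodule.neg_mem _ hm⟩)
      · refine hspan.trans (Submodule.span_mono ?_)
        rintro σ ⟨h1, h2⟩
        refine ⟨h1, ?_⟩
        rw [hmov]
        exact Submodule.mem_sup_right h2

theorem mov_le_span (w : W) :
    mov cs w ≤ Submodule.span ℝ {τ | IsPosRoot cs τ ∧ τ ∈ mov cs w} := by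
  obtain ⟨_, _, _, _, h⟩ := exists_reflection_factorization cs w
  exact h

/-- Carter's lemma: reflection length is the codimension of the fixed space. -/
theorem rlen_eq_rk (w : W) : rlen cs w = rk cs w := by
  obtain ⟨l, hl, hlen, hprod, -⟩ := exists_reflection_factorization cs w
  apply le_antisymm
  · exact Nat.sInf_le ⟨l, hl, hlen, hprod⟩
  · have hne : {k | ∃ l : List W, (∀ t ∈ l, cs.IsReflection t) ∧ l.length = k ∧
        l.prod = w}.Nonempty := ⟨_, l, hl, hlen, hprod⟩
    obtain ⟨l', hl', hlen', hprod'⟩ := Nat.sInf_mem hne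
    change _ = rlen cs w at hlen'
    rw [← hlen', ← hprod']
    clear hlen' hprod'
    induction l' with
    | nil => simp [rk_one]
    | cons t l' ih =>
      rw [List.prod_cons, List.length_cons]
      obtain ⟨τ, hτ, ht⟩ := exists_root_of_reflection cs (hl' t (by simp))
      have h1 := rk_mul_le cs t l'.prod
      rw [ht.rk_eq hτ.ne_zero] at h1
      have h2 := ih fun t' ht' => hl' t' (by simp [ht'])
      omega

end

/-! ### The reflection order in terms of moved spaces -/

/-- The reflection order, with reflection length replaced by the rank of the moved space. -/
def Below [Fintype B] (cs : CoxeterSystem M W) (u w : W) : Prop :=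
  rk cs w = rk cs u + rk cs (u⁻¹ * w)

section
variable [Fintype B] (cs : CoxeterSystem M W)

theorem one_below (w : W) : Below cs 1 w := by simp [Below, rk_one]

theorem below_refl (w : W) : Below cs w w := by simp [Below, rk_one]

variable {cs}

theorem Below.mov_le {u w : W} (h : Below cs u w) : mov cs u ≤ mov cs w := by
  have := mov_mul_of_rk cs (u := u) (v := u⁻¹ * w) (by rw [mul_inv_cancel_left]; exact h)
  rw [mul_inv_cancel_left] at this
  rw [this]
  exact le_sup_left

theorem Below.rk_le {u w : W} (h : Below cs u w) : rk cs u ≤ rk cs w :=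
  Submodule.finrank_mono h.mov_le

theorem below_mul {u v : W} (h : rk cs (u * v) = rk cs u + rk cs v) : Below cs u (u * v) := by
  rw [Below, inv_mul_cancel_left, h]

theorem Below.trans {u v w : W} (h : Below cs u v) (h' : Below cs v w) : Below cs u w := by
  have h1 := rk_mul_le cs (u⁻¹ * v) (v⁻¹ * w)
  have h2 := rk_mul_le cs u (u⁻¹ * w)
  rw [mul_inv_cancel_left] at h2
  have e : u⁻¹ * v * (v⁻¹ * w) = u⁻¹ * w := by group
  rw [e] at h1
  unfold Below at *
  omega

/-- Removing a common left factor preserves the order. -/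
theorem Below.inv_mul {u v w : W} (h : Below cs u v) (h' : Below cs v w) :
    Below cs (u⁻¹ * v) (u⁻¹ * w) := by
  have h1 := h.trans h'
  unfold Below at *
  have e : (u⁻¹ * v)⁻¹ * (u⁻¹ * w) = v⁻¹ * w := by group
  rw [e]
  omega

theorem Below.conj {u w : W} (h : Below cs u w) (g : W) :
    Below cs (g * u * g⁻¹) (g * w * g⁻¹) := by
  unfold Below at *
  have e : (g * u * g⁻¹)⁻¹ * (g * w * g⁻¹) = g * (u⁻¹ * w) * g⁻¹ := by group
  rw [e, rk_conj, rk_conj, rk_conj, h]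

/-- The right factor of an additive factorization is below the product as well. -/
theorem Below.right {u w : W} (h : Below cs u w) : Below cs (u⁻¹ * w) w := by
  unfold Below at *
  have e : (u⁻¹ * w)⁻¹ * w = w⁻¹ * u * w⁻¹⁻¹ := by group
  rw [e, rk_conj]
  omega

/-- Replacing the right factor of an additive factorization of `w` by something below it. -/
theorem Below.mul_left {u v w : W} (h : Below cs u w) (hv : Below cs v (u⁻¹ * w)) :
    rk cs (u * v) = rk cs u + rk cs v ∧ Below cs (u * v) w := by
  have h1 := rk_mul_le cs u v
  have h2 := rk_mul_le cs (u * v) ((u * v)⁻¹ * w)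
  rw [mul_inv_cancel_left] at h2
  unfold Below at *
  have e : v⁻¹ * (u⁻¹ * w) = (u * v)⁻¹ * w := by group
  rw [e] at hv
  omega

end

section
variable [Fintype B] [Fintype W] {cs : CoxeterSystem M W}

theorem eq_one_of_rk {w : W} (h : rk cs w = 0) : w = 1 := by
  by_contra hw
  obtain ⟨τ, hτ, hm⟩ := exists_root_mem_mov cs hw
  obtain ⟨t, -, ht⟩ := exists_reflection_of_root cs hτ
  have := ht.rk_mul hτ.ne_zero hm
  omega

theorem rle_iff_below {u w : W} : rle cs u w ↔ Below cs u w := by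
  simp only [rle, Below, rlen_eq_rk]

theorem Below.antisymm {u w : W} (h : Below cs u w) (h' : Below cs w u) : u = w := by
  have h0 : rk cs (u⁻¹ * w) = 0 := by
    have := h'.rk_le
    unfold Below at h
    omega
  have := eq_one_of_rk h0
  exact inv_mul_eq_one.1 this

theorem ReflectsIn.below {t w : W} {τ : B → ℝ} (h : ReflectsIn cs t τ) (hτ : τ ≠ 0)
    (hw : τ ∈ mov cs w) : Below cs t w := by
  have := h.rk_mul hτ hw
  rw [Below, h.rk_eq hτ]
  omega

theorem ReflectsIn.not_mem_mov {t w : W} {τ : B → ℝ} (h : ReflectsIn cs t τ) (hτ : τ ≠ 0)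
    (ht : cs.IsReflection t) (hw : τ ∈ mov cs w) : τ ∉ mov cs (t⁻¹ * w) := by
  intro hm
  have h1 := h.rk_mul hτ hw
  have h2 := h.rk_mul hτ hm
  have e : t⁻¹ * (t⁻¹ * w) = w := by rw [ht.inv, ← mul_assoc, ht.mul_self, one_mul]
  rw [e] at h2
  omega

/-- Splitting a reflection off two elements `v ≤ w` whose moved spaces contain its root. -/
theorem ReflectsIn.mov_inv_mul {t v w : W} {τ : B → ℝ} (h : ReflectsIn cs t τ) (hτ : τ ≠ 0)
    (ht : cs.IsReflection t) (hv : τ ∈ mov cs v) (hvw : Below cs v w) :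
    mov cs (t⁻¹ * v) = mov cs v ⊓ mov cs (t⁻¹ * w) := by
  have hw := hvw.mov_le hv
  have hb := (h.below hτ hv)
  apply Submodule.eq_of_le_of_finrank_le
  · exact le_inf hb.right.mov_le (hb.inv_mul hvw).mov_le
  · have hlt : mov cs v ⊓ mov cs (t⁻¹ * w) < mov cs v := by
      refine lt_of_le_of_ne inf_le_left fun he => h.not_mem_mov hτ ht hw ?_
      rw [← he] at hv
      exact hv.2
    have h1 := Submodule.finrank_lt_finrank_of_lt hlt
    have h2 := h.rk_mul hτ hv
    unfold rk at h2
    omega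

/-- Below a fixed element, the reflection order is inclusion of moved spaces. -/
theorem below_of_mov_le {u v w : W} (hu : Below cs u w) (hv : Below cs v w)
    (h : mov cs u ≤ mov cs v) : Below cs u v := by
  induction hn : rk cs u generalizing u v w with
  | zero => rw [eq_one_of_rk hn]; exact one_below cs v
  | succ n ih =>
    have hne : u ≠ 1 := by
      rintro rfl
      rw [rk_one] at hn
      omega
    obtain ⟨τ, hτ, hm⟩ := exists_root_mem_mov cs hne
    obtain ⟨t, htr, ht⟩ := exists_reflection_of_root cs hτ
    have hτ := hτ.ne_zero
    have htu := ht.below hτ hm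
    have htv := ht.below hτ (h hm)
    have h1 := ht.rk_mul hτ hm
    have h3 := ih (htu.inv_mul hu) (htv.inv_mul hv) (by
      rw [ht.mov_inv_mul hτ htr hm hu, ht.mov_inv_mul hτ htr (h hm) hv]
      exact inf_le_inf_right _ h) (by omega)
    have := (htv.mul_left h3).2
    rwa [mul_inv_cancel_left] at this

/-! ### Moved spaces of products of distinct simple reflections -/

theorem mov_simple (i : B) : mov cs (cs.simple i) = Submodule.span ℝ {simpleRoot i} :=
  (reflectsIn_simple cs i).mov_eq (simpleRoot_isPosRoot cs i).1.ne_zero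

theorem mov_wordProd_le {L : List B} {x : B → ℝ} (hx : x ∈ mov cs (cs.wordProd L)) {j : B}
    (hj : j ∉ L) : x j = 0 := by
  induction L generalizing x with
  | nil =>
    obtain ⟨y, rfl⟩ := (mem_mov cs).1 hx
    simp
  | cons i L ih =>
    rw [CoxeterSystem.wordProd_cons] at hx
    obtain ⟨a, ha, b, hb, rfl⟩ := Submodule.mem_sup.1 (mov_mul_le cs _ _ hx)
    rw [mov_simple] at ha
    obtain ⟨c, rfl⟩ := Submodule.mem_span_singleton.1 ha
    simp only [List.mem_cons, not_or] at hj
    simp [ih hb hj.2, simpleRoot_ne hj.1]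

theorem simpleRoot_not_mem {i : B} {L : List B} (h : i ∉ L) :
    simpleRoot i ∉ mov cs (cs.wordProd L) := by
  intro hx
  have := mov_wordProd_le hx h
  rw [simpleRoot_self] at this
  norm_num at this

theorem rk_wordProd {L : List B} (h : L.Nodup) : rk cs (cs.wordProd L) = L.length := by
  induction L with
  | nil => simp [rk_one]
  | cons i L ih =>
    rw [List.nodup_cons] at h
    rw [CoxeterSystem.wordProd_cons, rk_mul_of_disjoint, ih h.2,
      (reflectsIn_simple cs i).rk_eq (simpleRoot_isPosRoot cs i).1.ne_zero, List.length_cons,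
      add_comm]
    rw [mov_simple, eq_bot_iff]
    rintro x ⟨h1, h2⟩
    obtain ⟨c, rfl⟩ := Submodule.mem_span_singleton.1 h1
    have := mov_wordProd_le h2 h.1
    simp [simpleRoot_self] at this
    simp [this]

/-- The moved space of a product of distinct simple reflections is the span of their simple
roots. -/
theorem simpleRoot_mem_mov {L : List B} (h : L.Nodup) {i : B} (hi : i ∈ L) :
    simpleRoot i ∈ mov cs (cs.wordProd L) := by
  induction L with
  | nil => simp at hi
  | cons j L ih =>
    have h' := List.nodup_cons.1 h
    have e := mov_mul_of_rk cs (u := cs.simple j) (v := cs.wordProd L) (by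
      rw [← CoxeterSystem.wordProd_cons, rk_wordProd h, rk_wordProd h'.2,
        (reflectsIn_simple cs j).rk_eq (simpleRoot_isPosRoot cs j).1.ne_zero, List.length_cons,
        add_comm])
    rw [CoxeterSystem.wordProd_cons, e]
    rcases List.mem_cons.1 hi with rfl | hi
    · apply Submodule.mem_sup_left
      rw [mov_simple]
      exact Submodule.mem_span_singleton_self _
    · exact Submodule.mem_sup_right (ih h'.2 hi)

theorem mem_mov_wordProd {L : List B} (h : L.Nodup) {x : B → ℝ} (hx : ∀ j, j ∉ L → x j = 0) :
    x ∈ mov cs (cs.wordProd L) := by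
  rw [eq_sum_simpleRoot x]
  refine Submodule.sum_mem _ fun i _ => ?_
  by_cases hi : i ∈ L
  · exact Submodule.smul_mem _ _ (simpleRoot_mem_mov h hi)
  · rw [hx i hi, zero_smul]; exact Submodule.zero_mem _

end

/-! ### Cones of positive roots -/

theorem nnspan_nonneg {S : Set (B → ℝ)} (hS : ∀ τ ∈ S, ∀ b, 0 ≤ τ b) {x : B → ℝ}
    (hx : x ∈ Submodule.span NNReal S) (b : B) : 0 ≤ x b := by
  induction hx using Submodule.span_induction with
  | mem x h => exact hS x h b
  | zero => simp
  | add x y _ _ h1 h2 => exact add_nonneg h1 h2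
  | smul a x _ h => exact mul_nonneg a.2 h

theorem nnspan_le_span (S : Set (B → ℝ)) {x : B → ℝ} (hx : x ∈ Submodule.span NNReal S) :
    x ∈ Submodule.span ℝ S :=
  (Submodule.span_le (p := (Submodule.span ℝ S).restrictScalars NNReal)).2
    Submodule.subset_span hx

theorem nnspan_smul {S : Set (B → ℝ)} {x : B → ℝ} (hx : x ∈ Submodule.span NNReal S) {r : ℝ}
    (hr : 0 ≤ r) : r • x ∈ Submodule.span NNReal S :=
  Submodule.smul_mem _ (⟨r, hr⟩ : NNReal) hx

theorem nnspan_map {S T : Set (B → ℝ)} (f : (B → ℝ) →ₗ[ℝ] (B → ℝ))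
    (h : ∀ τ ∈ S, f τ ∈ Submodule.span NNReal T) {x : B → ℝ}
    (hx : x ∈ Submodule.span NNReal S) : f x ∈ Submodule.span NNReal T := by
  induction hx using Submodule.span_induction with
  | mem x hx => exact h x hx
  | zero => simp
  | add x y _ _ h1 h2 => rw [map_add]; exact Submodule.add_mem _ h1 h2
  | smul a x _ h =>
    rw [NNReal.smul_def, map_smul]
    exact nnspan_smul h a.2

/-- The positive roots in a subspace. -/
def posRoots [Fintype B] (cs : CoxeterSystem M W) (U : Submodule ℝ (B → ℝ)) : Set (B → ℝ) :=
  {τ | IsPosRoot cs τ ∧ τ ∈ U}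

/-- The closed convex cone spanned by the positive roots in the moved space of `α`. -/
def rootCone [Fintype B] (cs : CoxeterSystem M W) (α : W) : Submodule NNReal (B → ℝ) :=
  Submodule.span NNReal (posRoots cs (mov cs α))

theorem simple_inv_mul (cs : CoxeterSystem M W) (i : B) (w : W) :
    (cs.simple i)⁻¹ * w = cs.simple i * w := by
  rw [cs.inv_simple]

section
variable [Fintype B] {cs : CoxeterSystem M W}

theorem rootCone_nonneg {α : W} {x : B → ℝ} (hx : x ∈ rootCone cs α) (b : B) : 0 ≤ x b :=
  nnspan_nonneg (fun _ hτ => hτ.1.2) hx b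

theorem rootCone_le_mov {α : W} {x : B → ℝ} (hx : x ∈ rootCone cs α) : x ∈ mov cs α :=
  Submodule.span_le.2 (fun _ hτ => hτ.2) (nnspan_le_span _ hx)

variable [Fintype W]

/-- The positive roots in a subspace lie in the cone of finitely many of them with pairwise
nonpositive inner products. -/
theorem exists_obtuse_base (cs : CoxeterSystem M W) (U : Submodule ℝ (B → ℝ)) :
    ∃ Δ : Finset (B → ℝ), ↑Δ ⊆ posRoots cs U ∧
      posRoots cs U ⊆ Submodule.span NNReal (Δ : Set (B → ℝ)) ∧
      ∀ β ∈ Δ, ∀ β' ∈ Δ, β ≠ β' → ip cs β β' ≤ 0 := by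
  classical
  have hfin : (posRoots cs U).Finite := (finite_roots cs).subset fun τ hτ => hτ.1.1
  obtain ⟨Δ, ⟨h1, h2⟩, hmin⟩ := exists_minimalFor_of_wellFoundedLT
    (fun Δ : Finset (B → ℝ) => ↑Δ ⊆ posRoots cs U ∧
      posRoots cs U ⊆ Submodule.span NNReal (Δ : Set (B → ℝ))) Finset.card
    ⟨hfin.toFinset, by simp, by simp⟩
  refine ⟨Δ, h1, h2, ?_⟩
  -- no positive multiple of an element of `Δ` is in the cone of the others
  have hirr : ∀ β ∈ Δ, ∀ r : ℝ, ∀ y ∈ Submodule.span NNReal ((Δ.erase β : Finset _) : Set (B → ℝ)),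
      0 < ∑ b, y b → r • β = y → False := by
    intro β hβ r y hy hpos he
    have hβpos := (h1 hβ).1.sum_pos
    have hr : 0 < r := by
      rw [← he] at hpos
      simp only [Pi.smul_apply, smul_eq_mul, ← Finset.mul_sum] at hpos
      exact pos_of_mul_pos_left hpos hβpos.le
    have hmem : β ∈ Submodule.span NNReal ((Δ.erase β : Finset _) : Set (B → ℝ)) := by
      have : β = r⁻¹ • y := by rw [← he, smul_smul, inv_mul_cancel₀ hr.ne', one_smul]
      exact Set.mem_of_eq_of_mem this (nnspan_smul hy (inv_nonneg.2 hr.le))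
    have := hmin (j := Δ.erase β) ⟨fun x hx => h1 (Finset.mem_of_mem_erase hx), fun x hx => by
      refine Submodule.span_le.2 ?_ (h2 hx)
      intro z hz
      by_cases hzβ : z = β
      · subst hzβ; exact hmem
      · exact Submodule.subset_span (Finset.mem_coe.2 (Finset.mem_erase.2 ⟨hzβ, hz⟩))⟩
      (Finset.card_le_card (Finset.erase_subset _ _))
    have h3 := Finset.card_erase_lt_of_mem hβ
    omega
  have hsplit : ∀ β ∈ Δ, ∀ σ ∈ posRoots cs U, ∃ a : ℝ,
      ∃ z ∈ Submodule.span NNReal ((Δ.erase β : Finset _) : Set (B → ℝ)), σ = a • β + z := by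
    intro β hβ σ hσ
    have := h2 hσ
    rw [← Finset.insert_erase hβ, Finset.coe_insert, SetLike.mem_coe,
      Submodule.mem_span_insert] at this
    obtain ⟨a, z, hz, rfl⟩ := this
    exact ⟨a, z, hz, by rw [NNReal.smul_def]⟩
  have hnn : ∀ β, ∀ z ∈ Submodule.span NNReal ((Δ.erase β : Finset _) : Set (B → ℝ)),
      0 ≤ ∑ b, z b := fun β z hz => Finset.sum_nonneg fun b _ =>
    nnspan_nonneg (fun τ hτ => (h1 (Finset.mem_of_mem_erase hτ)).1.2) hz b
  intro β hβ β' hβ' hne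
  by_contra hpos
  rw [not_le] at hpos
  obtain ⟨t, -, ht⟩ := exists_reflection_of_root cs (h1 hβ).1.1
  have hpβ := ip_self_pos cs (h1 hβ).1.1.ne_zero
  set k := 2 * ip cs β' β / ip cs β β with hk
  have hkpos : 0 < k := by rw [hk, ip_comm cs β' β]; positivity
  have hroot := (h1 hβ').1.1.map t
  rw [ht β', ← hk] at hroot
  have hU : β' - k • β ∈ U := U.sub_mem (h1 hβ').2 (U.smul_mem _ (h1 hβ).2)
  have hβe : β ∈ Submodule.span NNReal ((Δ.erase β' : Finset _) : Set (B → ℝ)) :=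
    Submodule.subset_span (Finset.mem_coe.2 (Finset.mem_erase.2 ⟨hne, hβ⟩))
  have hβe' : β' ∈ Submodule.span NNReal ((Δ.erase β : Finset _) : Set (B → ℝ)) :=
    Submodule.subset_span (Finset.mem_coe.2 (Finset.mem_erase.2 ⟨hne.symm, hβ'⟩))
  rcases hroot.pos_or_neg with hp | hp
  · obtain ⟨a, z, hz, he⟩ := hsplit β' hβ' _ ⟨hp, hU⟩
    refine hirr β' hβ' (1 - a) (z + k • β)
      (Submodule.add_mem _ hz (nnspan_smul hβe hkpos.le)) ?_ ?_
    · have := hnn _ z hz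
      have := mul_pos hkpos (h1 hβ).1.sum_pos
      simp only [Pi.add_apply, Pi.smul_apply, smul_eq_mul, Finset.sum_add_distrib,
        ← Finset.mul_sum]
      linarith
    · rw [sub_smul, one_smul, sub_eq_iff_eq_add]
      exact (sub_eq_iff_eq_add.1 he).trans (by abel)
  · obtain ⟨a, z, hz, he⟩ := hsplit β hβ _ ⟨hp, U.neg_mem hU⟩
    refine hirr β hβ (k - a) (z + β') (Submodule.add_mem _ hz hβe') ?_ ?_
    · have := hnn _ z hz
      have := (h1 hβ').1.sum_pos
      simp only [Pi.add_apply, Finset.sum_add_distrib]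
      linarith
    · have e : k • β = -(β' - k • β) + β' := by abel
      rw [sub_smul, sub_eq_iff_eq_add, e, he]
      abel

/-- Let `α ≤ s i * c'`, with `c'` a product of simple reflections other than `s i`, and let `e i`
be in the moved space of `α`. Then the moved space of `s i * α` is a complement of `e i`, given by
the vanishing of the coordinate `i`. -/
theorem sub_coord_mem_mov {i : B} {L : List B} (hi : i ∉ L) {α : W}
    (hα : Below cs α (cs.wordProd (i :: L))) (he : simpleRoot i ∈ mov cs α) :
    (∀ x ∈ mov cs (cs.simple i * α), x i = 0) ∧
    mov cs (cs.simple i * α) ≤ mov cs α ∧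
    ∀ x ∈ mov cs α, x - x i • simpleRoot i ∈ mov cs (cs.simple i * α) := by
  have hr := reflectsIn_simple cs i
  have h0 := (simpleRoot_isPosRoot cs i).1.ne_zero
  have hb := hr.below h0 he
  have h1 := (hb.inv_mul hα).mov_le
  rw [simple_inv_mul, CoxeterSystem.wordProd_cons, simple_inv_mul,
    CoxeterSystem.simple_mul_simple_cancel_left] at h1
  have hz : ∀ x ∈ mov cs (cs.simple i * α), x i = 0 := fun x hx => mov_wordProd_le (h1 hx) hi
  refine ⟨hz, ?_, ?_⟩
  · have := hb.right.mov_le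
    rwa [simple_inv_mul] at this
  · intro x hx
    have hm := mov_mul_of_rk cs (u := cs.simple i) (v := (cs.simple i)⁻¹ * α)
      (by rw [mul_inv_cancel_left]; exact hb)
    rw [mul_inv_cancel_left, simple_inv_mul] at hm
    rw [hm, mov_simple] at hx
    obtain ⟨a, ha, b, hb, rfl⟩ := Submodule.mem_sup.1 hx
    obtain ⟨c, rfl⟩ := Submodule.mem_span_singleton.1 ha
    have : (c • simpleRoot i + b) i = c := by simp [hz b hb, simpleRoot_self]
    rw [this, add_sub_cancel_left]
    exact hb

/-- In the situation of `sub_coord_mem_mov`, the cone of `α` is spanned by `e i` and the cone of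
`s i * α`: every other member of an obtuse base has vanishing coordinate `i`. -/
theorem sub_coord_mem_rootCone {i : B} {L : List B} (hi : i ∉ L) {α : W}
    (hα : Below cs α (cs.wordProd (i :: L))) (he : simpleRoot i ∈ mov cs α) {x : B → ℝ}
    (hx : x ∈ rootCone cs α) : x - x i • simpleRoot i ∈ rootCone cs (cs.simple i * α) := by
  classical
  obtain ⟨hz, hle, hsub⟩ := sub_coord_mem_mov hi hα he
  obtain ⟨Δ, h1, h2, hobt⟩ := exists_obtuse_base cs (mov cs α)
  -- some member of the base is proportional to `e i`
  obtain ⟨ε, hε, m, hm, hεm⟩ : ∃ ε ∈ Δ, ∃ m : ℝ, 0 < m ∧ ε = m • simpleRoot i := by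
    have hmem := h2 (show simpleRoot i ∈ posRoots cs (mov cs α) from
      ⟨simpleRoot_isPosRoot cs i, he⟩)
    obtain ⟨f, -, hf⟩ := Submodule.mem_span_finset.1 hmem
    have hex : ∃ ε ∈ Δ, f ε ≠ 0 := by
      by_contra hcon
      push Not at hcon
      rw [Finset.sum_eq_zero fun ε hε => by rw [hcon ε hε, zero_smul]] at hf
      exact (simpleRoot_isPosRoot cs i).1.ne_zero hf.symm
    obtain ⟨ε, hε, hfε⟩ := hex
    have hzero : ∀ b, b ≠ i → ε b = 0 := by
      intro b hb
      have h3 := congrFun hf b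
      rw [simpleRoot_ne hb, Finset.sum_apply] at h3
      have h4 := (Finset.sum_eq_zero_iff_of_nonneg (fun δ hδ =>
        mul_nonneg (f δ).2 ((h1 hδ).1.2 b))).1 h3 ε hε
      exact (mul_eq_zero.1 h4).resolve_left fun h => hfε (NNReal.eq h)
    have hεe : ε = ε i • simpleRoot i := by
      ext b
      by_cases hb : b = i
      · subst hb; simp [simpleRoot_self]
      · simp [hzero b hb, simpleRoot_ne hb]
    refine ⟨ε, hε, ε i, lt_of_le_of_ne ((h1 hε).1.2 i) fun h0 => (h1 hε).1.1.ne_zero ?_, hεe⟩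
    rw [hεe, ← h0, zero_smul]
  set Δ₀ := Δ.filter (fun δ => δ i = 0) with hΔ₀
  have hmem₀ : ∀ {δ}, δ ∈ Δ₀ ↔ δ ∈ Δ ∧ δ i = 0 := by simp [hΔ₀]
  have hspan₀ : ∀ y ∈ mov cs (cs.simple i * α), y ∈ Submodule.span ℝ (Δ₀ : Set (B → ℝ)) := by
    intro y hy
    refine Submodule.span_le.2 ?_ (mov_le_span cs _ hy)
    rintro τ ⟨hτ, hτm⟩
    obtain ⟨f, -, hf⟩ := Submodule.mem_span_finset.1 (h2 (show τ ∈ posRoots cs (mov cs α) from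
      ⟨hτ, hle hτm⟩))
    have h3 := congrFun hf i
    rw [hz τ hτm, Finset.sum_apply] at h3
    have h4 := (Finset.sum_eq_zero_iff_of_nonneg (fun δ hδ =>
        mul_nonneg (f δ).2 ((h1 hδ).1.2 i))).1 h3
    rw [← hf]
    refine Submodule.sum_mem _ fun δ hδ => ?_
    rcases mul_eq_zero.1 (h4 δ hδ) with h5 | h5
    · have : f δ = 0 := NNReal.eq h5
      rw [this, zero_smul]; exact Submodule.zero_mem _
    · rw [NNReal.smul_def]
      exact Submodule.smul_mem _ _ (Submodule.subset_span (hmem₀.2 ⟨hδ, h5⟩))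
  have hkey : ∀ β ∈ Δ, β i = 0 ∨ ∃ a : ℝ, β = a • simpleRoot i := by
    intro β hβ
    by_contra hcon
    push Not at hcon
    obtain ⟨hβi, hβe⟩ := hcon
    have hβi : 0 < β i := lt_of_le_of_ne ((h1 hβ).1.2 i) hβi.symm
    obtain ⟨g, -, hg⟩ := Submodule.mem_span_finset.1 (hspan₀ _ (hsub β (h1 hβ).2))
    set zp := ∑ δ ∈ Δ₀, max (g δ) 0 • δ with hzp
    set zm := ∑ δ ∈ Δ₀, max (-g δ) 0 • δ with hzm
    have hpm : zp - zm = β - β i • simpleRoot i := by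
      rw [← hg, hzp, hzm, ← Finset.sum_sub_distrib]
      refine Finset.sum_congr rfl fun δ _ => ?_
      rw [← sub_smul]
      congr 1
      rcases le_total (g δ) 0 with h | h
      · rw [max_eq_right h, max_eq_left (by linarith)]; ring
      · rw [max_eq_left h, max_eq_right (by linarith)]; ring
    have heq : β + zm = β i • simpleRoot i + zp := by
      have : zp = β - β i • simpleRoot i + zm := by rw [← hpm]; abel
      rw [this]; abel
    have hne₀ : ∀ δ ∈ Δ₀, β ≠ δ := by
      rintro δ hδ rfl
      exact hβi.ne' (hmem₀.1 hδ).2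
    have hεδ : ∀ δ ∈ Δ₀, δ ≠ ε := by
      rintro δ hδ rfl
      have := (hmem₀.1 hδ).2
      rw [hεm] at this
      simp [simpleRoot_self] at this
      exact hm.ne' this
    have hei : simpleRoot i = m⁻¹ • ε := by rw [hεm, smul_smul, inv_mul_cancel₀ hm.ne', one_smul]
    have hm' : 0 ≤ m⁻¹ := inv_nonneg.2 hm.le
    have i1 : ip cs β (simpleRoot i) ≤ 0 := by
      rw [hei, map_smul, smul_eq_mul]
      exact mul_nonpos_of_nonneg_of_nonpos hm' (hobt β hβ ε hε fun h => hβe m (h.trans hεm))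
    have i2 : ip cs zm (simpleRoot i) ≤ 0 := by
      rw [hzm, map_sum (ip cs), LinearMap.sum_apply]
      refine Finset.sum_nonpos fun δ hδ => ?_
      rw [map_smul, LinearMap.smul_apply, smul_eq_mul, hei, map_smul, smul_eq_mul]
      exact mul_nonpos_of_nonneg_of_nonpos (le_max_right _ _)
        (mul_nonpos_of_nonneg_of_nonpos hm' (hobt δ (hmem₀.1 hδ).1 ε hε (hεδ δ hδ)))
    have i3 : ip cs β zp ≤ 0 := by
      rw [hzp, map_sum]
      refine Finset.sum_nonpos fun δ hδ => ?_
      rw [map_smul, smul_eq_mul]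
      exact mul_nonpos_of_nonneg_of_nonpos (le_max_right _ _)
        (hobt β hβ δ (hmem₀.1 hδ).1 (hne₀ δ hδ))
    have i4 : ip cs zm zp ≤ 0 := by
      rw [hzm, map_sum (ip cs), LinearMap.sum_apply]
      refine Finset.sum_nonpos fun δ hδ => ?_
      rw [map_smul, LinearMap.smul_apply, smul_eq_mul, hzp, map_sum, Finset.mul_sum]
      refine Finset.sum_nonpos fun δ' hδ' => ?_
      rw [map_smul, smul_eq_mul]
      by_cases hd : δ = δ'
      · subst hd
        rcases le_total (g δ) 0 with h | h
        · rw [max_eq_right h]; simp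
        · rw [max_eq_right (show -g δ ≤ 0 by linarith)]; simp
      · exact mul_nonpos_of_nonneg_of_nonpos (le_max_right _ _)
          (mul_nonpos_of_nonneg_of_nonpos (le_max_right _ _)
            (hobt δ (hmem₀.1 hδ).1 δ' (hmem₀.1 hδ').1 hd))
    have i5 : ip cs (β + zm) (β + zm) ≤ 0 := by
      have e : ip cs (β + zm) (β + zm) = ip cs (β + zm) (β i • simpleRoot i + zp) := by rw [← heq]
      rw [e]
      simp only [map_add, map_smul, LinearMap.add_apply, smul_eq_mul]
      nlinarith
    have h0 := congrFun (ip_self_eq_zero cs i5) i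
    have hzmi : zm i = 0 := by
      rw [hzm, Finset.sum_apply]
      exact Finset.sum_eq_zero fun δ hδ => by simp [(hmem₀.1 hδ).2]
    simp [hzmi] at h0
    exact hβi.ne' h0
  let f : (B → ℝ) →ₗ[ℝ] (B → ℝ) :=
    LinearMap.id - (LinearMap.proj i : (B → ℝ) →ₗ[ℝ] ℝ).smulRight (simpleRoot i)
  have hf : ∀ y, f y = y - y i • simpleRoot i := fun y => rfl
  rw [← hf]
  refine nnspan_map f (fun τ hτ => nnspan_map f (fun δ hδ => ?_) (h2 hτ)) hx
  rw [hf]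
  rcases hkey δ hδ with h | ⟨a, rfl⟩
  · have h3 := hsub δ (h1 hδ).2
    rw [h, zero_smul, sub_zero] at h3 ⊢
    exact Submodule.subset_span ⟨(h1 hδ).1, h3⟩
  · simp [simpleRoot_self]

end

/-! ### The smallest noncrossing element whose cone contains a given vector -/

/-- Among the elements below the product of the word `L` there is one which moves `x` and is below
every element whose root cone contains `x`. -/
def Good [Fintype B] (cs : CoxeterSystem M W) (L : List B) (x : B → ℝ) : Prop :=
  ∃ δ, Below cs δ (cs.wordProd L) ∧ x ∈ mov cs δ ∧
    ∀ α, Below cs α (cs.wordProd L) → x ∈ rootCone cs α → Below cs δ α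

section
variable [Fintype B] {cs : CoxeterSystem M W}

theorem simple_apply_ne {i j : B} (h : j ≠ i) (x : B → ℝ) :
    geomRep cs (cs.simple i) x j = x j := by
  rw [geomRep_simple_apply]; simp [simpleRoot_ne h]

/-- A simple reflection maps a positive root to a positive root if its simple root is not in the
moved space under consideration. -/
theorem simple_apply_posRoots {i : B} {α : W} (he : simpleRoot i ∉ mov cs α) {τ : B → ℝ}
    (hτ : τ ∈ posRoots cs (mov cs α)) : IsPosRoot cs (geomRep cs (cs.simple i) τ) := by
  rcases hτ.1.simple_apply i with h | ⟨a, ha, rfl⟩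
  · exact h
  · exact absurd (((mov cs α).smul_mem_iff ha.ne').1 hτ.2) he

variable [Fintype W]

theorem simple_below {i : B} {α : W} (he : simpleRoot i ∈ mov cs α) : Below cs (cs.simple i) α :=
  (reflectsIn_simple cs i).below (simpleRoot_isPosRoot cs i).1.ne_zero he

/-- If `s i` makes the coordinate `i` of `x` negative, then `s i` is below every element whose cone
contains `x`, and `s i` can be split off. -/
theorem good_cons_of_neg {i : B} {L : List B} (hL : (i :: L).Nodup) {x : B → ℝ}
    (hneg : geomRep cs (cs.simple i) x i < 0) (h : Good cs L (x - x i • simpleRoot i)) :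
    Good cs (i :: L) x := by
  obtain ⟨δ, h1, h2, h3⟩ := h
  have hi := (List.nodup_cons.1 hL).1
  have hc : (cs.simple i)⁻¹ * cs.wordProd (i :: L) = cs.wordProd L := by
    rw [CoxeterSystem.wordProd_cons, inv_mul_cancel_left]
  have hsc := simple_below (cs := cs) (simpleRoot_mem_mov hL (List.mem_cons_self (a := i) (l := L)))
  obtain ⟨h4, h5⟩ := hsc.mul_left (v := δ) (by rwa [hc])
  refine ⟨cs.simple i * δ, h5, ?_, ?_⟩
  · rw [mov_mul_of_rk cs h4, Submodule.mem_sup]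
    refine ⟨x i • simpleRoot i, ?_, _, h2, by abel⟩
    rw [mov_simple]
    exact Submodule.smul_mem _ _ (Submodule.mem_span_singleton_self _)
  · intro α hα hx
    have he : simpleRoot i ∈ mov cs α := by
      by_contra he
      have := nnspan_map (T := posRoots cs ⊤) (geomRep cs (cs.simple i)) (fun τ hτ =>
        Submodule.subset_span ⟨simple_apply_posRoots he hτ, Submodule.mem_top⟩) hx
      exact absurd (nnspan_nonneg (fun τ hτ => hτ.1.2) this i) (not_le.2 hneg)
    have hs := simple_below he
    have h6 := hs.inv_mul hα
    rw [hc, simple_inv_mul] at h6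
    have h7 := h3 _ h6 (sub_coord_mem_rootCone hi hα he hx)
    rw [← simple_inv_mul] at h7
    exact (hs.mul_left h7).2

/-- Conjugation by `s i` carries the problem for `i :: L` to that for `L ++ [i]` as long as the
coordinate `i` stays nonnegative. -/
theorem good_cons_of_nonneg {i : B} {L : List B} (hL : (i :: L).Nodup) {x : B → ℝ}
    (hnn : 0 ≤ geomRep cs (cs.simple i) x i)
    (h : Good cs (L ++ [i]) (geomRep cs (cs.simple i) x)) : Good cs (i :: L) x := by
  obtain ⟨δ, h1, h2, h3⟩ := h
  have hi := (List.nodup_cons.1 hL).1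
  set s := cs.simple i with hs
  have hss : s⁻¹ = s := cs.inv_simple i
  have hss' : s * s = 1 := cs.simple_mul_simple_self i
  have hc : s * cs.wordProd (L ++ [i]) * s⁻¹ = cs.wordProd (i :: L) := by
    rw [CoxeterSystem.wordProd_append, CoxeterSystem.wordProd_singleton,
      CoxeterSystem.wordProd_cons, ← hs]
    group
  have hc' : s * cs.wordProd (i :: L) * s⁻¹ = cs.wordProd (L ++ [i]) := by
    rw [← hc, hss]
    simp only [mul_assoc, hss', mul_one]
    rw [← mul_assoc, hss', one_mul]
  refine ⟨s * δ * s⁻¹, hc ▸ h1.conj s, ?_, ?_⟩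
  · rw [mem_mov_conj, hss]; exact h2
  · intro α hα hx
    have key : geomRep cs s x ∈ rootCone cs (s * α * s⁻¹) := by
      by_cases he : simpleRoot i ∈ mov cs α
      · have hz := sub_coord_mem_rootCone hi hα he hx
        have hle := (sub_coord_mem_mov hi hα he).2.1
        have e : geomRep cs s x =
            (x - x i • simpleRoot i) + geomRep cs s x i • simpleRoot i := by
          ext j
          by_cases hj : j = i
          · subst hj; simp [simpleRoot_self]
          · simp [simpleRoot_ne hj, hs, simple_apply_ne hj]
        -- the moved space of `α` contains `e i`, so it is stable under `s i`
        have hst : ∀ y ∈ mov cs α, y ∈ mov cs (s * α * s⁻¹) := by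
          intro y hy
          rw [mem_mov_conj, hss, hs, geomRep_simple_apply]
          exact Submodule.sub_mem _ hy (Submodule.smul_mem _ _ he)
        rw [e]
        refine Submodule.add_mem _ (Submodule.span_mono ?_ hz) (nnspan_smul
          (S := posRoots cs (mov cs (s * α * s⁻¹)))
          (Submodule.subset_span ⟨simpleRoot_isPosRoot cs i, hst _ he⟩) hnn)
        rintro τ ⟨hτ, hτm⟩
        exact ⟨hτ, hst _ (hle hτm)⟩
      · refine nnspan_map (T := posRoots cs (mov cs (s * α * s⁻¹))) (geomRep cs s)
          (fun τ hτ => Submodule.subset_span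
          ⟨simple_apply_posRoots he hτ, ?_⟩) hx
        rw [mem_mov_conj, geomRep_inv_apply]
        exact hτ.2
    have h4 := (h3 _ (hc' ▸ hα.conj s) key).conj s
    have e : s * (s * α * s⁻¹) * s⁻¹ = α := by
      rw [hss]
      simp only [mul_assoc, hss', mul_one]
      rw [← mul_assoc, hss', one_mul]
    rwa [e] at h4

/-- `Good` holds for every nonnegative vector supported on `L`. Failure would persist under
applying the simple reflections of `L` cyclically, so the whole orbit of `x` under the product of
`L` would be nonnegative; but that orbit sums to zero. -/
theorem good_of_nonneg {L : List B} (hL : L.Nodup) {x : B → ℝ} (hx : ∀ b, 0 ≤ x b)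
    (hsupp : ∀ b, b ∉ L → x b = 0) : Good cs L x := by
  induction hn : L.length generalizing L x with
  | zero =>
    have : x = 0 := by
      ext b
      exact hsupp b (by simp [List.eq_nil_of_length_eq_zero hn])
    subst this
    exact ⟨1, one_below cs _, Submodule.zero_mem _, fun α _ _ => one_below cs α⟩
  | succ n ih =>
    have step : ∀ A D : List B, ∀ x : B → ℝ, (A ++ D).Nodup → (A ++ D).length = n + 1 →
        (∀ b, 0 ≤ x b) → (∀ b, b ∉ A ++ D → x b = 0) → ¬ Good cs (A ++ D) x →
        (∀ b, 0 ≤ geomRep cs (cs.wordProd A)⁻¹ x b) ∧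
        (∀ b, b ∉ D ++ A → geomRep cs (cs.wordProd A)⁻¹ x b = 0) ∧
        ¬ Good cs (D ++ A) (geomRep cs (cs.wordProd A)⁻¹ x) := by
      intro A
      induction A with
      | nil =>
        intro D x _ _ h1 h2 h3
        simpa using ⟨h1, by simpa using h2, h3⟩
      | cons i A ihA =>
        intro D x hnd hlen h1 h2 h3
        rw [List.cons_append] at hnd hlen h2 h3
        have hnd' := List.nodup_cons.1 hnd
        have hnn : 0 ≤ geomRep cs (cs.simple i) x i := by
          by_contra hneg
          refine h3 (good_cons_of_neg hnd (not_le.1 hneg) (ih hnd'.2 ?_ ?_ ?_))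
          · intro b
            by_cases hb : b = i
            · subst hb; simp [simpleRoot_self]
            · simpa [simpleRoot_ne hb] using h1 b
          · intro b hb
            by_cases hbi : b = i
            · subst hbi; simp [simpleRoot_self]
            · simpa [simpleRoot_ne hbi] using h2 b (by simp at hb ⊢; tauto)
          · simpa using hlen
        have hperm : (A ++ (D ++ [i])).Perm (i :: (A ++ D)) := by
          rw [← List.append_assoc]
          exact List.perm_append_singleton _ _
        have := ihA (D ++ [i]) (geomRep cs (cs.simple i) x) (hperm.nodup_iff.2 hnd)
          (by rw [hperm.length_eq]; exact hlen) (fun b => by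
            by_cases hb : b = i
            · subst hb; exact hnn
            · rw [simple_apply_ne hb]; exact h1 b) (fun b hb => by
            rw [hperm.mem_iff] at hb
            have hbi : b ≠ i := by rintro rfl; simp at hb
            rw [simple_apply_ne hbi]; exact h2 b hb) (fun hg => h3 (good_cons_of_nonneg hnd hnn
              (by rwa [List.append_assoc])))
        rw [CoxeterSystem.wordProd_cons, mul_inv_rev, geomRep_mul_apply, cs.inv_simple]
        simpa only [List.append_assoc, List.singleton_append] using this
    by_contra hbad
    set c := cs.wordProd L with hc
    have iter : ∀ k : ℕ, (∀ b, 0 ≤ geomRep cs (c⁻¹ ^ k) x b) ∧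
        (∀ b, b ∉ L → geomRep cs (c⁻¹ ^ k) x b = 0) ∧ ¬ Good cs L (geomRep cs (c⁻¹ ^ k) x) := by
      intro k
      induction k with
      | zero => simpa using ⟨hx, hsupp, hbad⟩
      | succ k ihk =>
        obtain ⟨h1, h2, h3⟩ := ihk
        have := step L [] (geomRep cs (c⁻¹ ^ k) x) (by simpa using hL) (by simpa using hn) h1
          (by simpa using h2) (by simpa using h3)
        rw [← hc, ← geomRep_mul_apply, ← pow_succ'] at this
        simpa using this
    set N := orderOf c⁻¹ with hN
    have hNpos : 0 < N := orderOf_pos _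
    set S := ∑ k ∈ Finset.range N, geomRep cs (c⁻¹ ^ k) x with hS
    have hfix : S ∈ fixs cs c := by
      have h1 : geomRep cs c⁻¹ S = S := by
        have e : geomRep cs c⁻¹ S = ∑ k ∈ Finset.range N, geomRep cs (c⁻¹ ^ (k + 1)) x := by
          rw [hS, map_sum]
          refine Finset.sum_congr rfl fun k _ => ?_
          rw [← geomRep_mul_apply, ← pow_succ']
        have h2 := Finset.sum_range_succ (fun k => geomRep cs (c⁻¹ ^ k) x) N
        have h3 := Finset.sum_range_succ' (fun k => geomRep cs (c⁻¹ ^ k) x) N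
        rw [h2, hN, pow_orderOf_eq_one, pow_zero, ← hN] at h3
        rw [e]
        exact (add_right_cancel h3).symm
      rw [mem_fixs]
      conv_lhs => rw [← h1]
      exact geomRep_apply_inv cs c S
    have hmov : S ∈ mov cs c := mem_mov_wordProd hL fun j hj => by
      rw [hS, Finset.sum_apply]
      exact Finset.sum_eq_zero fun k _ => (iter k).2.1 j hj
    have hS0 : S = 0 := ip_self_eq_zero cs (ip_fixs_mov cs hfix hmov).le
    have hx0 : x = 0 := by
      ext b
      have h1 := congrFun hS0 b
      rw [hS, Finset.sum_apply] at h1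
      have := (Finset.sum_eq_zero_iff_of_nonneg (fun k _ => (iter k).1 b)).1 h1 0
        (Finset.mem_range.2 hNpos)
      simpa using this
    apply hbad
    rw [hx0]
    exact ⟨1, one_below cs _, Submodule.zero_mem _, fun α _ _ => one_below cs α⟩

/-! ### Meets in the interval below a Coxeter element -/

theorem exists_glb_wordProd {L : List B} (hL : L.Nodup) (hfull : ∀ i, i ∈ L) (A : Set W)
    (hA : ∀ a ∈ A, Below cs a (cs.wordProd L)) :
    ∃ δ, Below cs δ (cs.wordProd L) ∧ (∀ a ∈ A, Below cs δ a) ∧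
      ∀ r, Below cs r (cs.wordProd L) → (∀ a ∈ A, Below cs r a) → Below cs r δ := by
  set R : Set (B → ℝ) := {τ | IsPosRoot cs τ ∧ ∀ a ∈ A, τ ∈ mov cs a} with hR
  have hRfin : R.Finite := (finite_roots cs).subset fun τ hτ => hτ.1.1
  obtain ⟨x, hx, hgen⟩ := exists_generic (fun w => mov cs w) hRfin
  obtain ⟨δ, h1, h2, h3⟩ := good_of_nonneg (cs := cs) hL
    (nnspan_nonneg (fun τ hτ => hτ.1.2) hx) (fun b hb => absurd (hfull b) hb)
  refine ⟨δ, h1, fun a ha => h3 a (hA a ha) (Submodule.span_mono ?_ hx), fun r hr hra => ?_⟩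
  · exact fun τ hτ => ⟨hτ.1, hτ.2 a ha⟩
  · refine below_of_mov_le hr h1 ((mov_le_span cs r).trans (Submodule.span_le.2 ?_))
    exact fun τ hτ => hgen δ h2 ⟨hτ.1, fun a ha => (hra a ha).mov_le hτ.2⟩

theorem exists_glb {γ : W} (hγ : IsCoxeterElement cs γ) (A : Set W)
    (hA : ∀ a ∈ A, Below cs a γ) :
    ∃ δ, Below cs δ γ ∧ (∀ a ∈ A, Below cs δ a) ∧
      ∀ r, Below cs r γ → (∀ a ∈ A, Below cs r a) → Below cs r δ := by
  obtain ⟨v, L, hL, hfull, rfl⟩ := hγ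
  have back : ∀ {a b : W}, Below cs a (v * b * v⁻¹) → Below cs (v⁻¹ * a * v) b := by
    intro a b h
    have := h.conj v⁻¹
    have e : v⁻¹ * (v * b * v⁻¹) * v⁻¹⁻¹ = b := by group
    rwa [e, inv_inv] at this
  have forth : ∀ {a b : W}, Below cs a (v⁻¹ * b * v) → Below cs (v * a * v⁻¹) b := by
    intro a b h
    have := h.conj v
    have e : v * (v⁻¹ * b * v) * v⁻¹ = b := by group
    rwa [e] at this
  obtain ⟨δ, h1, h2, h3⟩ := exists_glb_wordProd hL hfull ((fun a => v⁻¹ * a * v) '' A) (by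
    rintro _ ⟨a, ha, rfl⟩
    exact back (hA a ha))
  refine ⟨v * δ * v⁻¹, h1.conj v, fun a ha => forth (h2 _ ⟨a, ha, rfl⟩), fun r hr hra => ?_⟩
  have := (h3 (v⁻¹ * r * v) (back hr) (by
    rintro _ ⟨a, ha, rfl⟩
    simpa using (hra a ha).conj v⁻¹)).conj v
  have e : v * (v⁻¹ * r * v) * v⁻¹ = r := by group
  rwa [e] at this

end

/-! ### The action of the positive monoid on the interval -/

section
variable {cs : CoxeterSystem M W} {γ : W}

theorem pgen_one : pgen cs γ 1 = 1 := by simp [pgen]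

theorem pgen_coe (w : NCGen cs γ) : pgen cs γ w = PresentedMonoid.of (posRels cs γ) w := by
  rw [pgen, dif_pos w.2]

variable [Fintype B]

/-- Left multiplication by `w` is monotone on the elements below its right complement. -/
theorem Below.mul_mono {w m n : W} (hw : Below cs w γ) (hn : Below cs n (w⁻¹ * γ))
    (h : Below cs m n) : Below cs (w * m) (w * n) := by
  have h1 := below_mul (hw.mul_left hn).1
  exact (h1.mul_left (v := m) (by rwa [inv_mul_cancel_left])).2

variable [Fintype W]

theorem exists_meet (hγ : IsCoxeterElement cs γ) {a b : W} (ha : Below cs a γ)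
    (hb : Below cs b γ) :
    ∃ δ, Below cs δ a ∧ Below cs δ b ∧ ∀ r, Below cs r a → Below cs r b → Below cs r δ := by
  obtain ⟨δ, -, h2, h3⟩ := exists_glb hγ {a, b} (by simp [ha, hb])
  refine ⟨δ, h2 a (by simp), h2 b (by simp), fun r hra hrb => h3 r (hra.trans ha) ?_⟩
  simp [hra, hrb]

/-- For `w, v` in `[1,γ]`, the element `w * m` of `[1,γ]`, where `m` is the meet of `v` and the
right complement `w⁻¹ * γ` of `w`. -/
noncomputable def push (hγ : IsCoxeterElement cs γ) {w : W} (hw : Below cs w γ)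
    (v : {v : W // Below cs v γ}) : {v : W // Below cs v γ} :=
  ⟨w * (exists_meet hγ v.2 hw.right).choose,
    (hw.mul_left (exists_meet hγ v.2 hw.right).choose_spec.2.1).2⟩

theorem push_spec (hγ : IsCoxeterElement cs γ) {w : W} (hw : Below cs w γ)
    (v : {v : W // Below cs v γ}) :
    ∃ m, (push hγ hw v : W) = w * m ∧ Below cs m v ∧ Below cs m (w⁻¹ * γ) ∧
      ∀ r, Below cs r v → Below cs r (w⁻¹ * γ) → Below cs r m :=
  ⟨_, rfl, (exists_meet hγ v.2 hw.right).choose_spec⟩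

theorem push_push (hγ : IsCoxeterElement cs γ) {w₁ w₂ w₃ : W} (h₁ : Below cs w₁ γ)
    (h₂ : Below cs w₂ γ) (h₃ : Below cs w₃ γ) (he : w₁ * w₂ = w₃)
    (hadd : rk cs w₁ + rk cs w₂ = rk cs w₃) (v : {v : W // Below cs v γ}) :
    push hγ h₁ (push hγ h₂ v) = push hγ h₃ v := by
  subst he
  obtain ⟨m₂, e₂, a₂, b₂, c₂⟩ := push_spec hγ h₂ v
  obtain ⟨m₁, e₁, a₁, b₁, c₁⟩ := push_spec hγ h₁ (push hγ h₂ v)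
  obtain ⟨m₃, e₃, a₃, b₃, c₃⟩ := push_spec hγ h₃ v
  rw [e₂] at a₁ c₁
  apply Subtype.ext
  rw [e₁, e₃, mul_assoc]
  congr 1
  have e : (w₁ * w₂)⁻¹ * γ = w₂⁻¹ * (w₁⁻¹ * γ) := by group
  rw [e] at b₃ c₃
  have hw : Below cs w₂ (w₁⁻¹ * γ) := by
    have := (below_mul hadd.symm).inv_mul h₃
    rwa [inv_mul_cancel_left] at this
  have hw' : Below cs w₂ (w₂ * m₂) := below_mul (h₂.mul_left b₂).1
  apply Below.antisymm (cs := cs)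
  · have hm : Below cs w₂ m₁ := c₁ _ hw' hw
    have hn := c₃ (w₂⁻¹ * m₁) ?_ (hm.inv_mul b₁)
    · have := hw.mul_mono b₃ hn
      rwa [mul_inv_cancel_left] at this
    · have := hm.inv_mul a₁
      rw [inv_mul_cancel_left] at this
      exact this.trans a₂
  · refine c₁ _ ?_ (hw.mul_left b₃).2
    exact h₂.mul_mono b₂ (c₂ _ a₃ (b₃.trans (hw.inv_mul h₁.right)))

/-- The action of the positive monoid on `[1,γ]` in which `⟨w⟩` acts by `push`. -/
noncomputable def pushHom (hγ : IsCoxeterElement cs γ) :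
    PosMonoid cs γ →* Function.End {v : W // Below cs v γ} :=
  PresentedMonoid.lift (M := Function.End {v : W // Below cs v γ})
    (fun w : NCGen cs γ => push hγ (rle_iff_below.1 w.2.2)) (by
    rintro _ _ ⟨w₁, w₂, w₃, rfl, rfl, he, hadd⟩
    simp only [rlen_eq_rk] at hadd
    funext v
    exact push_push hγ (rle_iff_below.1 w₁.2.2) (rle_iff_below.1 w₂.2.2)
      (rle_iff_below.1 w₃.2.2) he hadd v)

/-- The largest element of `[1,γ]` dividing `P` on the left. -/
noncomputable def head (hγ : IsCoxeterElement cs γ) (P : PosMonoid cs γ) : W :=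
  (pushHom hγ P ⟨1, one_below cs γ⟩ : {v : W // Below cs v γ})

theorem head_below (hγ : IsCoxeterElement cs γ) (P : PosMonoid cs γ) :
    Below cs (head hγ P) γ :=
  (pushHom hγ P ⟨1, one_below cs γ⟩).2

theorem head_of_mul (hγ : IsCoxeterElement cs γ) (w : NCGen cs γ) (P : PosMonoid cs γ) :
    ∃ m, head hγ (PresentedMonoid.of (posRels cs γ) w * P) = w * m ∧ Below cs m (head hγ P) ∧
      Below cs m ((w : W)⁻¹ * γ) := by
  obtain ⟨m, h1, h2, h3, -⟩ := push_spec hγ (rle_iff_below.1 w.2.2)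
    (pushHom hγ P ⟨1, one_below cs γ⟩)
  refine ⟨m, ?_, h2, h3⟩
  rw [← h1, head, map_mul]
  rfl

theorem pgen_mul {u v : W} (hadd : rk cs (u * v) = rk cs u + rk cs v)
    (h : Below cs (u * v) γ) : pgen cs γ (u * v) = pgen cs γ u * pgen cs γ v := by
  by_cases hu : u = 1
  · subst hu; rw [one_mul, pgen_one, one_mul]
  by_cases hv : v = 1
  · subst hv; rw [mul_one, pgen_one, mul_one]
  have h1 : Below cs u γ := (below_mul hadd).trans h
  have h2 : Below cs v γ := by
    have := (below_mul hadd).right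
    rw [inv_mul_cancel_left] at this
    exact this.trans h
  have h3 : u * v ≠ 1 := by
    intro h0
    rw [h0, rk_one] at hadd
    exact hu (eq_one_of_rk (cs := cs) (by omega))
  have e := PresentedMonoid.mk_eq_mk_of_rel (rels := posRels cs γ) (
    show posRels cs γ _ _ from ⟨⟨u, hu, rle_iff_below.2 h1⟩, ⟨v, hv, rle_iff_below.2 h2⟩,
      ⟨u * v, h3, rle_iff_below.2 h⟩,
      rfl, rfl, rfl, by simp only [rlen_eq_rk]; exact hadd.symm⟩)
  rw [pgen, dif_pos ⟨h3, rle_iff_below.2 h⟩, pgen, dif_pos ⟨hu, rle_iff_below.2 h1⟩, pgen,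
    dif_pos ⟨hv, rle_iff_below.2 h2⟩]
  exact e.symm

theorem pgen_dvd {u w : W} (h : Below cs u w) (hw : Below cs w γ) :
    pgen cs γ w = pgen cs γ u * pgen cs γ (u⁻¹ * w) := by
  have := pgen_mul (cs := cs) (γ := γ) (u := u) (v := u⁻¹ * w)
    (by rw [mul_inv_cancel_left]; exact h) (by rwa [mul_inv_cancel_left])
  rwa [mul_inv_cancel_left] at this

theorem head_dvd (hγ : IsCoxeterElement cs γ) (P : PosMonoid cs γ) :
    ∃ Z, P = pgen cs γ (head hγ P) * Z := by
  obtain ⟨l, rfl⟩ := PresentedMonoid.surjective_mk P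
  induction l using FreeMonoid.inductionOn' with
  | one =>
    refine ⟨1, ?_⟩
    rw [map_one, head, map_one, mul_one]
    exact pgen_one.symm
  | of_mul w l ih =>
    obtain ⟨Z, hZ⟩ := ih
    set P := PresentedMonoid.mk (posRels cs γ) l
    obtain ⟨m, h1, h2, h3⟩ := head_of_mul hγ w P
    have hw := rle_iff_below.1 w.2.2
    obtain ⟨h4, h5⟩ := hw.mul_left h3
    refine ⟨pgen cs γ (m⁻¹ * head hγ P) * Z, ?_⟩
    have e : PresentedMonoid.mk (posRels cs γ) (FreeMonoid.of w * l) =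
        PresentedMonoid.of (posRels cs γ) w * P := map_mul _ _ _
    rw [e, h1, pgen_mul h4 h5, mul_assoc, ← mul_assoc (pgen cs γ m),
      ← pgen_dvd h2 (head_below hγ P),
      ← hZ, pgen_coe]

end

/-- Brady's Corollary on common left divisors: if `P = ⟨a₁⟩X₁ = ⋯ = ⟨a_k⟩X_k`
then `P = ⟨a₁ ∨ ⋯ ∨ a_k⟩ Z` for some positive word `Z`. -/
theorem common_left_divisor_join [Fintype B] [Fintype W] (cs : CoxeterSystem M W) (γ : W)
    (hγ : IsCoxeterElement cs γ) (k : ℕ) (hk : 0 < k) (a : Fin k → W)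
    (ha : ∀ i, a i ≠ 1 ∧ rle cs (a i) γ)
    (P : PosMonoid cs γ) (X : Fin k → PosMonoid cs γ)
    (hP : ∀ i, P = PresentedMonoid.of (posRels cs γ) ⟨a i, ha i⟩ * X i) :
    ∃ j : W, rle cs j γ ∧ IsIntervalLUB cs γ (Set.range a) j ∧
      ∃ Z : PosMonoid cs γ, P = pgen cs γ j * Z := by
  -- the join is the meet of all upper bounds
  obtain ⟨j, hj, hjle, hjmax⟩ := exists_glb hγ
    {r | Below cs r γ ∧ ∀ i, Below cs (a i) r} fun r hr => hr.1
  have haj : ∀ i, Below cs (a i) j := fun i =>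
    hjmax _ (rle_iff_below.1 (ha i).2) fun r hr => hr.2 i
  refine ⟨j, rle_iff_below.2 hj, ⟨rle_iff_below.2 hj, ?_, ?_⟩, ?_⟩
  · rintro _ ⟨i, rfl⟩
    exact rle_iff_below.2 (haj i)
  · intro r hr har
    exact rle_iff_below.2 (hjle r ⟨rle_iff_below.1 hr, fun i =>
      rle_iff_below.1 (har _ ⟨i, rfl⟩)⟩)
  · obtain ⟨Z, hZ⟩ := head_dvd hγ P
    have hjh : Below cs j (head hγ P) := hjle _ ⟨head_below hγ P, fun i => by
      obtain ⟨m, h1, -, h3⟩ := head_of_mul hγ ⟨a i, ha i⟩ (X i)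
      rw [← hP i] at h1
      rw [h1]
      exact below_mul ((rle_iff_below.1 (ha i).2).mul_left h3).1⟩
    refine ⟨pgen cs γ (j⁻¹ * head hγ P) * Z, ?_⟩
    rw [← mul_assoc, ← pgen_dvd hjh (head_below hγ P)]
    exact hZ
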